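/- arXiv:2210.13888 — 9 statements merged into one kernel-verified Lean document; each statement's English description precedes it below -/
import Mathlib

section
/- Let Γ = ⟨γ₁,…,γₙ ∣ r_l, l ∈ L⟩ be a finitely generated group, presented as a quotient π : Fₙ ↠ Γ of the free group Fₙ on γ₁,…,γₙ by the normal subgroup generated by the relators r_l. Then the skein algebra S_Γ is isomorphic, as a ℂ-algebra, to the quotient of S_{Fₙ} by the two-sided ideal generated by the elements [r_l] − 2, [γᵢ r_l] − [γᵢ], and [γⱼγₖ r_l] − [γⱼγₖ], for all l ∈ L, 1 ≤ i ≤ n and 1 ≤ j < k ≤ n, the isomorphism being induced by π. -/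
/-! The map `[w] ↦ [π w]` is well defined on the quotient, so the point is to invert it: the class
`t w` of `[w]` in the quotient must depend on `π w` only.

Fix a relator `d` and measure the failure of `t (w d) = t w` by the defect
`D w = t (w d) - t w` (`skeinDefect`).  The skein relation gives
`D (a g b) + D (a g⁻¹ b) = t g * D (a b)`, and `D 1 = 0` gives `D w⁻¹ = - D w`.  If `D` vanishes on
`1, a, b, c, ab, ac, bc`, three applications of the skein relation show `D (abc) = - D (cba)`,
while inverting `cba` and flipping the three inverses back shows `D (cba) = D (abc)`; hence
`2 D (abc) = 0` (`IsSkein.defect_triple`).  This is the vanishing consequence of Vogt's formula for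
`2 t (abcd)`.  So vanishing of `D` on `1`, the generators and the products of two distinct
generators in increasing order propagates to all words, by induction on word length with
`c` the tail of the word (`IsSkein.defect_eq_zero`).

The elements `x` with `t (w x) = t w` for all `w` form a normal subgroup, since `t (ab) = t (ba)`
(`IsSkein.kernel`).  It contains the relators, hence `ker π`, so `t` factors through `Γ`, and the
universal property of the skein algebra yields the inverse. -/

noncomputable section

/-- The element of the tensor algebra `T(ℂG)` corresponding to a group element `g ∈ G`. -/
def skeinGen (G : Type) [Group G] (g : G) : TensorAlgebra ℂ (MonoidAlgebra ℂ G) :=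
  TensorAlgebra.ι ℂ (MonoidAlgebra.of ℂ G g)

/-- The defining relations of the skein algebra of a group `G`: `e = 2`,
`α ⊗ β = β ⊗ α` and `α ⊗ β = αβ + αβ⁻¹` for all `α, β ∈ G`. -/
inductive SkeinRel (G : Type) [Group G] :
    TensorAlgebra ℂ (MonoidAlgebra ℂ G) → TensorAlgebra ℂ (MonoidAlgebra ℂ G) → Prop
  | unit : SkeinRel G (skeinGen G 1) 2
  | comm (a b : G) : SkeinRel G (skeinGen G a * skeinGen G b) (skeinGen G b * skeinGen G a)
  | mul (a b : G) : SkeinRel G (skeinGen G a * skeinGen G b)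
      (skeinGen G (a * b) + skeinGen G (a * b⁻¹))

/-- The skein algebra `S_G` of a group `G`: the quotient of the tensor algebra `T(ℂG)`
by the two-sided ideal generated by `e − 2`, `α⊗β − β⊗α` and `α⊗β − αβ − αβ⁻¹`. -/
abbrev SkeinAlgebra (G : Type) [Group G] := RingQuot (SkeinRel G)

/-- The class `[g] ∈ S_G` of a group element `g ∈ G`. -/
def skeinClass (G : Type) [Group G] (g : G) : SkeinAlgebra G :=
  RingQuot.mkAlgHom ℂ (SkeinRel G) (skeinGen G g)

/-- The relations imposed on `S_{Fₙ}` by a presentation with relators `r l`: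
`[r_l] = 2`, `[γᵢ r_l] = [γᵢ]` and `[γⱼγₖ r_l] = [γⱼγₖ]` for `l ∈ L`, `1 ≤ i ≤ n`,
`1 ≤ j < k ≤ n`.  The quotient of `S_{Fₙ}` by the ring congruence generated by these pairs
is the quotient by the two-sided ideal generated by the corresponding differences. -/
inductive PresRel (n : ℕ) (L : Type) (r : L → FreeGroup (Fin n)) :
    SkeinAlgebra (FreeGroup (Fin n)) → SkeinAlgebra (FreeGroup (Fin n)) → Prop
  | relator (l : L) :
      PresRel n L r (skeinClass (FreeGroup (Fin n)) (r l)) 2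
  | one_relator (l : L) (i : Fin n) :
      PresRel n L r (skeinClass (FreeGroup (Fin n)) (FreeGroup.of i * r l))
        (skeinClass (FreeGroup (Fin n)) (FreeGroup.of i))
  | two_relator (l : L) (j k : Fin n) (h : j < k) :
      PresRel n L r (skeinClass (FreeGroup (Fin n)) (FreeGroup.of j * FreeGroup.of k * r l))
        (skeinClass (FreeGroup (Fin n)) (FreeGroup.of j * FreeGroup.of k))

/-! ### Skein maps and their defects -/

/-- A map `t` from a group to a ring satisfying the relations of the trace functions of
`SL₂`-characters; these are the maps represented by the skein algebra. -/
structure IsSkein {G A : Type} [Group G] [Ring A] (t : G → A) : Prop where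
  one : t 1 = 2
  comm : ∀ a b, t a * t b = t b * t a
  mul : ∀ a b, t a * t b = t (a * b) + t (a * b⁻¹)

/-- The defect `t (w d) - t w` of invariance of `t` under right multiplication by `d`. -/
def skeinDefect {G A : Type} [Group G] [Ring A] (t : G → A) (d w : G) : A := t (w * d) - t w

namespace IsSkein

variable {G A : Type} [Group G] [Ring A] {t : G → A}

lemma inv (h : IsSkein t) (g : G) : t g⁻¹ = t g := by
  have h1 := h.mul 1 g
  rw [h.one, one_mul, one_mul, two_mul] at h1
  exact (add_left_cancel h1).symm

lemma cyc (h : IsSkein t) (a b : G) : t (a * b) = t (b * a) := by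
  have h1 := h.comm a b
  rw [h.mul, h.mul, ← h.inv (a * b⁻¹), mul_inv_rev, inv_inv] at h1
  exact add_right_cancel h1

/-- The skein relation in the middle of a word. -/
lemma insert (h : IsSkein t) (a g b : G) :
    t (a * g * b) + t (a * g⁻¹ * b) = t g * t (a * b) := by
  rw [h.cyc a b, h.mul, ← h.inv (g * (b * a)⁻¹), h.cyc (a * g) b, h.cyc (a * g⁻¹) b,
    h.cyc g (b * a)]
  congr 2 <;> group

section Defect

variable {d : G}

lemma defect_insert (h : IsSkein t) (a g b : G) :
    skeinDefect t d (a * g * b) + skeinDefect t d (a * g⁻¹ * b) =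
      t g * skeinDefect t d (a * b) := by
  have h1 := h.insert a g b
  have h2 := h.insert a g (b * d)
  simp only [skeinDefect, mul_sub, mul_assoc] at h1 h2 ⊢
  rw [← h1, ← h2]
  abel

lemma defect_flip (h : IsSkein t) {a b : G} (g : G) (h0 : skeinDefect t d (a * b) = 0) :
    skeinDefect t d (a * g⁻¹ * b) = - skeinDefect t d (a * g * b) := by
  have h1 := h.defect_insert (d := d) a g b
  rw [h0, mul_zero] at h1
  exact eq_neg_of_add_eq_zero_right h1

lemma defect_inv (h : IsSkein t) (h1 : skeinDefect t d 1 = 0) (w : G) :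
    skeinDefect t d w⁻¹ = - skeinDefect t d w := by
  have hd : t d = 2 := by
    have := sub_eq_zero.1 h1
    rwa [one_mul, h.one] at this
  have h2 := h.mul w d
  rw [hd, mul_two, ← h.inv (w * d⁻¹), mul_inv_rev, inv_inv, h.cyc d] at h2
  simp only [skeinDefect, h.inv w]
  grind

lemma defect_inv_eq_zero (h : IsSkein t) (h1 : skeinDefect t d 1 = 0) {w : G}
    (hw : skeinDefect t d w = 0) : skeinDefect t d w⁻¹ = 0 := by
  rw [h.defect_inv h1, hw, neg_zero]

lemma defect_mul_inv (h : IsSkein t) {a b : G} (ha : skeinDefect t d a = 0)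
    (hab : skeinDefect t d (a * b) = 0) : skeinDefect t d (a * b⁻¹) = 0 := by
  have := h.defect_flip (d := d) (a := a) (b := 1) b (by simpa using ha)
  simpa [hab] using this

lemma defect_inv_mul (h : IsSkein t) {a b : G} (hb : skeinDefect t d b = 0)
    (hab : skeinDefect t d (a * b) = 0) : skeinDefect t d (a⁻¹ * b) = 0 := by
  have := h.defect_flip (d := d) (a := 1) (b := b) a (by simpa using hb)
  simpa [hab] using this

lemma defect_swap (h : IsSkein t) (h1 : skeinDefect t d 1 = 0) {a b : G}
    (ha : skeinDefect t d a = 0) (hb : skeinDefect t d b = 0)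
    (hab : skeinDefect t d (a * b) = 0) : skeinDefect t d (b * a) = 0 := by
  have h2 := h.defect_mul_inv (h.defect_inv_eq_zero h1 ha)
    (h.defect_inv_mul hb hab)
  have h3 := h.defect_inv_eq_zero h1 h2
  simpa using h3

lemma defect_self (h : IsSkein t) (h1 : skeinDefect t d 1 = 0) {a : G}
    (ha : skeinDefect t d a = 0) : skeinDefect t d (a * a) = 0 := by
  have := h.defect_insert (d := d) a a 1
  simpa [ha, h1] using this

/-- Rewriting `t (abcd)` by three skein relations as `t (cbad)` with opposite sign, up to terms in
which the vanishing of the defect on `1, a, b, c` makes the factor `d` irrelevant. -/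
lemma defect_reverse (h : IsSkein t) (h1 : skeinDefect t d 1 = 0) {a b c : G}
    (ha : skeinDefect t d a = 0) (hb : skeinDefect t d b = 0) (hc : skeinDefect t d c = 0) :
    skeinDefect t d (a * b * c) = - skeinDefect t d (c * b * a) := by
  have hd : t d = 2 := by
    have := sub_eq_zero.1 h1
    rwa [one_mul, h.one] at this
  have hbd : t (b * d⁻¹) = t b := by
    have := h.mul b d
    rw [hd, mul_two, sub_eq_zero.1 hb] at this
    exact (add_left_cancel this).symm
  have e1 := h.mul (a * b) (c * d)
  have e1' := h.mul (a * b) c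
  have e2 := h.mul (c⁻¹ * a) (b * d⁻¹)
  have e2' := h.mul (c⁻¹ * a) b
  have e3 := h.mul (a * d) (c * b)
  have e3' := h.mul a (c * b)
  rw [sub_eq_zero.1 hc] at e1
  rw [hbd] at e2
  rw [sub_eq_zero.1 ha] at e3
  have c1 : t (a * b * (c * d)⁻¹) = t (c⁻¹ * a * (b * d⁻¹)) := by
    rw [mul_inv_rev, ← mul_assoc, h.cyc _ c⁻¹]; simp only [mul_assoc]
  have c1' : t (a * b * c⁻¹) = t (c⁻¹ * a * b) := by
    rw [h.cyc _ c⁻¹]; simp only [mul_assoc]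
  have c2 : t (c⁻¹ * a * (b * d⁻¹)⁻¹) = t (a * d * (c * b)⁻¹) := by
    rw [mul_inv_rev, mul_inv_rev, inv_inv, mul_assoc, h.cyc]; simp only [mul_assoc]
  have c2' : t (c⁻¹ * a * b⁻¹) = t (a * (c * b)⁻¹) := by
    rw [mul_inv_rev, mul_assoc, h.cyc]; simp only [mul_assoc]
  have c3 : t (a * d * (c * b)) = t (c * b * a * d) := by
    rw [h.cyc]; simp only [mul_assoc]
  have c3' : t (a * (c * b)) = t (c * b * a) := by
    rw [h.cyc]
  rw [c1, ← mul_assoc] at e1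
  rw [c1'] at e1'
  rw [c2] at e2
  rw [c2'] at e2'
  rw [c3] at e3
  rw [c3'] at e3'
  simp only [skeinDefect]
  grind

/-- The defect of `abc` is the opposite of that of `cba`, and also equal to it, as one sees by
inverting `cba` and then flipping `a⁻¹`, `b⁻¹`, `c⁻¹` one at a time; so it vanishes when `A` has no
`2`-torsion. -/
lemma defect_triple (h : IsSkein t) (hA : ∀ x : A, x + x = 0 → x = 0)
    (h1 : skeinDefect t d 1 = 0) {a b c : G}
    (ha : skeinDefect t d a = 0) (hb : skeinDefect t d b = 0) (hc : skeinDefect t d c = 0)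
    (hab : skeinDefect t d (a * b) = 0) (hac : skeinDefect t d (a * c) = 0)
    (hbc : skeinDefect t d (b * c) = 0) : skeinDefect t d (a * b * c) = 0 := by
  have e1 := h.defect_reverse h1 ha hb hc
  have e2 := h.defect_inv h1 (c * b * a)
  have e3 := h.defect_flip (d := d) (a := 1) (b := b⁻¹ * c⁻¹) a (by
    rw [one_mul]
    exact h.defect_mul_inv (h.defect_inv_eq_zero h1 hb) (h.defect_inv_mul hc hbc))
  have e4 := h.defect_flip (d := d) (a := a) (b := c⁻¹) b (h.defect_mul_inv ha hac)
  have e5 := h.defect_flip (d := d) (a := a * b) (b := 1) c (by simpa using hab)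
  simp only [mul_inv_rev, one_mul, mul_one, mul_assoc] at *
  apply hA
  grind

/-- A defect vanishing on `1`, on the generators and on the products of two distinct generators in
increasing order vanishes identically. -/
lemma defect_eq_zero {n : ℕ} {t : FreeGroup (Fin n) → A} {d : FreeGroup (Fin n)}
    (h : IsSkein t) (hA : ∀ x : A, x + x = 0 → x = 0)
    (h1 : skeinDefect t d 1 = 0) (h2 : ∀ i, skeinDefect t d (FreeGroup.of i) = 0)
    (h3 : ∀ j k, j < k → skeinDefect t d (FreeGroup.of j * FreeGroup.of k) = 0)
    (w : FreeGroup (Fin n)) : skeinDefect t d w = 0 := by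
  have pair : ∀ j k, skeinDefect t d (FreeGroup.of j * FreeGroup.of k) = 0 := by
    intro j k
    rcases lt_trichotomy j k with hjk | rfl | hjk
    · exact h3 j k hjk
    · exact h.defect_self h1 (h2 j)
    · exact h.defect_swap h1 (h2 k) (h2 j) (h3 k j hjk)
  have hw : w ∈ Subgroup.closure (Set.range (FreeGroup.of : Fin n → FreeGroup (Fin n))) := by
    rw [FreeGroup.closure_range_of]; trivial
  -- The induction needs the vanishing on `s * u` for every generator `s`: passing from `u` to
  -- `s * u`, the triple `(s', s, u)` involves `s' * u`.
  suffices skeinDefect t d w = 0 ∧ ∀ i, skeinDefect t d (FreeGroup.of i * w) = 0 from this.1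
  induction hw using Subgroup.closure_induction_left with
  | one => exact ⟨h1, fun i => by simpa using h2 i⟩
  | mul_left x hx u _ ih =>
    obtain ⟨k, rfl⟩ := hx
    refine ⟨ih.2 k, fun i => ?_⟩
    rw [← mul_assoc]
    exact h.defect_triple hA h1 (h2 i) (h2 k) ih.1 (pair i k) (ih.2 i) (ih.2 k)
  | inv_mul_cancel x hx u _ ih =>
    obtain ⟨k, rfl⟩ := hx
    have hk := h.defect_inv_mul ih.1 (ih.2 k)
    refine ⟨hk, fun i => ?_⟩
    rw [← mul_assoc]
    exact h.defect_triple hA h1 (h2 i) (h.defect_inv_eq_zero h1 (h2 k)) ih.1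
      (h.defect_mul_inv (h2 i) (pair i k)) (ih.2 i) hk

end Defect

/-- The normal subgroup of the elements `x` with `t (w x) = t w` for all `w`. -/
def kernel (_ : IsSkein t) : Subgroup G where
  carrier := {x | ∀ w, t (w * x) = t w}
  one_mem' w := by rw [mul_one]
  mul_mem' {x y} hx hy w := by rw [← mul_assoc, hy, hx]
  inv_mem' {x} hx w := by rw [← hx (w * x⁻¹), inv_mul_cancel_right]

instance kernel_normal (h : IsSkein t) : h.kernel.Normal where
  conj_mem x hx g w := by
    rw [h.cyc, mul_assoc, h.cyc, ← mul_assoc]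
    rw [hx, mul_assoc, h.cyc]
    simp

end IsSkein

/-! ### The universal property of the skein algebra -/

lemma isSkein_skeinClass (G : Type) [Group G] : IsSkein (skeinClass G) where
  one := by
    exact (RingQuot.mkAlgHom_rel ℂ (SkeinRel.unit (G := G))).trans (map_ofNat _ 2)
  comm a b := by
    simpa [skeinClass] using RingQuot.mkAlgHom_rel ℂ (SkeinRel.comm a b)
  mul a b := by
    simpa [skeinClass] using RingQuot.mkAlgHom_rel ℂ (SkeinRel.mul a b)

lemma IsSkein.map {G A B : Type} [Group G] [Ring A] [Ring B] [Algebra ℂ A] [Algebra ℂ B]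
    {t : G → A} (h : IsSkein t) (f : A →ₐ[ℂ] B) : IsSkein fun g => f (t g) where
  one := by rw [h.one]; exact map_ofNat f 2
  comm a b := by rw [← map_mul, h.comm, map_mul]
  mul a b := by rw [← map_mul, h.mul, map_add]

lemma IsSkein.comp {G H A : Type} [Group G] [Group H] [Ring A]
    {t : H → A} (h : IsSkein t) (f : G →* H) : IsSkein fun g => t (f g) where
  one := by simp [h.one]
  comm a b := h.comm _ _
  mul a b := by simp [h.mul]

/-- The universal property of the skein algebra: existence. -/
lemma IsSkein.exists_lift {G A : Type} [Group G] [Ring A] [Algebra ℂ A] {t : G → A}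
    (h : IsSkein t) : ∃ f : SkeinAlgebra G →ₐ[ℂ] A, ∀ g, f (skeinClass G g) = t g := by
  let l : MonoidAlgebra ℂ G →ₗ[ℂ] A :=
    Finsupp.linearCombination ℂ t ∘ₗ (MonoidAlgebra.coeffLinearEquiv ℂ).toLinearMap
  have hl : ∀ g, TensorAlgebra.lift ℂ l (skeinGen G g) = t g := by
    intro g
    simp [skeinGen, l, MonoidAlgebra.of]
  refine ⟨RingQuot.liftAlgHom ℂ ⟨TensorAlgebra.lift ℂ l, ?_⟩, fun g => ?_⟩
  · rintro _ _ (_ | ⟨a, b⟩ | ⟨a, b⟩)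
    · rw [hl, h.one]; exact (map_ofNat _ 2).symm
    · simp only [map_mul, hl, h.comm a b]
    · simp only [map_mul, map_add, hl, h.mul a b]
  · rw [skeinClass, RingQuot.liftAlgHom_mkAlgHom_apply, hl]

/-- The universal property of the skein algebra: uniqueness. -/
lemma skeinAlgebra_hom_ext {G A : Type} [Group G] [Ring A] [Algebra ℂ A]
    {f f' : SkeinAlgebra G →ₐ[ℂ] A} (h : ∀ g, f (skeinClass G g) = f' (skeinClass G g)) :
    f = f' := by
  apply RingQuot.ringQuot_ext'
  apply TensorAlgebra.hom_ext
  apply MonoidAlgebra.lhom_ext'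
  intro g
  apply LinearMap.ext_ring
  exact h g

/-- **Theorem (presentation of the character algebra).**
Let `Γ = ⟨γ₁, …, γₙ ∣ r_l, l ∈ L⟩` be a finitely generated group, i.e. `π : Fₙ ↠ Γ` is
surjective with kernel the normal closure of the relators `r_l`.  Then
`S_Γ ≅ S_{Fₙ} / ([r_l] − 2, [γᵢ r_l] − [γᵢ], [γⱼγₖ r_l] − [γⱼγₖ])`, the isomorphism being
induced by `π`, i.e. sending the class of `[w]` to `[π w]` for every word `w ∈ Fₙ`. -/
theorem skeinAlgebra_of_presentation (n : ℕ) (L : Type) (r : L → FreeGroup (Fin n))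
    (Γ : Type) [Group Γ] (π : FreeGroup (Fin n) →* Γ)
    (hsurj : Function.Surjective π)
    (hker : π.ker = Subgroup.normalClosure (Set.range r)) :
    ∃ e : RingQuot (PresRel n L r) ≃ₐ[ℂ] SkeinAlgebra Γ,
      ∀ w : FreeGroup (Fin n),
        e (RingQuot.mkAlgHom ℂ (PresRel n L r) (skeinClass (FreeGroup (Fin n)) w)) =
          skeinClass Γ (π w) := by
  let A := RingQuot (PresRel n L r)
  let q : SkeinAlgebra (FreeGroup (Fin n)) →ₐ[ℂ] A := RingQuot.mkAlgHom ℂ (PresRel n L r)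
  have ht : IsSkein fun w => q (skeinClass _ w) :=
    IsSkein.map (B := A) (isSkein_skeinClass (FreeGroup (Fin n))) q
  have hA : ∀ x : A, x + x = 0 → x = 0 := by
    intro x hx
    rw [← two_smul ℂ x] at hx
    exact (smul_eq_zero_iff_right (two_ne_zero (α := ℂ))).1 hx
  have hle : π.ker ≤ ht.kernel := by
    rw [hker]
    apply Subgroup.normalClosure_le_normal
    rintro _ ⟨l, rfl⟩ w
    refine sub_eq_zero.1 (ht.defect_eq_zero (d := r l) hA ?_ (fun i => ?_) (fun j k hjk => ?_) w)
    · have h := RingQuot.mkAlgHom_rel ℂ (PresRel.relator (r := r) l)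
      have h1 := ht.one
      simp only [skeinDefect, one_mul, h1]
      rw [sub_eq_zero]
      exact h.trans (map_ofNat q 2)
    · exact sub_eq_zero.2 (RingQuot.mkAlgHom_rel ℂ (PresRel.one_relator (r := r) l i))
    · exact sub_eq_zero.2 (RingQuot.mkAlgHom_rel ℂ (PresRel.two_relator (r := r) l j k hjk))
  have hfac : ∀ v w, π v = π w → q (skeinClass _ v) = q (skeinClass _ w) := by
    intro v w hvw
    have hm : w⁻¹ * v ∈ π.ker := by simp [MonoidHom.mem_ker, hvw]
    simpa using hle hm w
  obtain ⟨F, hF⟩ := ((isSkein_skeinClass Γ).comp π).exists_lift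
  have hrel : ∀ l w, skeinClass Γ (π (w * r l)) = skeinClass Γ (π w) := by
    intro l w
    have : r l ∈ π.ker := hker ▸ Subgroup.subset_normalClosure ⟨l, rfl⟩
    rw [map_mul, MonoidHom.mem_ker.1 this, mul_one]
  let f : A →ₐ[ℂ] SkeinAlgebra Γ := RingQuot.liftAlgHom ℂ ⟨F, by
    rintro _ _ (l | ⟨l, i⟩ | ⟨l, j, k, _⟩)
    · have h := hrel l 1
      rw [one_mul, map_one, (isSkein_skeinClass Γ).one] at h
      rw [hF, h, map_ofNat]
    · rw [hF, hF, hrel]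
    · rw [hF, hF, hrel]⟩
  have hf : ∀ w, f (q (skeinClass _ w)) = skeinClass Γ (π w) := fun w =>
    (RingQuot.liftAlgHom_mkAlgHom_apply ℂ F _ _).trans (hF w)
  let s := Function.surjInv hsurj
  have hs : ∀ g, π (s g) = g := Function.surjInv_eq hsurj
  have hts : IsSkein fun g => q (skeinClass _ (s g)) := by
    refine ⟨?_, fun a b => ht.comm _ _, fun a b => ?_⟩
    · rw [hfac (s 1) 1 (by rw [hs, map_one])]
      exact ht.one
    · rw [hfac (s (a * b)) (s a * s b) (by simp [hs]),
        hfac (s (a * b⁻¹)) (s a * (s b)⁻¹) (by simp [hs])]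
      exact ht.mul _ _
  obtain ⟨k, hk⟩ := hts.exists_lift
  refine ⟨AlgEquiv.ofAlgHom f k ?_ ?_, hf⟩
  · apply skeinAlgebra_hom_ext
    intro g
    simp [hk, hf, hs]
  · apply RingQuot.ringQuot_ext'
    refine skeinAlgebra_hom_ext (A := A) (f := (k.comp f).comp q) (f' := q) fun w => ?_
    change k (f (q (skeinClass _ w))) = q (skeinClass _ w)
    rw [hf, hk]
    exact hfac _ _ (hs _)

end
end

section
/- Let Γ = ⟨γ₁,…,γₙ ∣ u_l = v_l, l ∈ L⟩ be a finitely generated group, presented as a quotient π : Fₙ ↠ Γ of the free group Fₙ on γ₁,…,γₙ by the normal subgroup generated by the elements u_l⁻¹v_l. Then the skein algebra S_Γ is isomorphic, as a ℂ-algebra, to the quotient of S_{Fₙ} by the two-sided ideal generated by the elements [v_l] − [u_l], [γᵢ v_l] − [γᵢ u_l], and [γⱼγₖ v_l] − [γⱼγₖ u_l], for all l ∈ L, 1 ≤ i ≤ n and 1 ≤ j < k ≤ n, the isomorphism being induced by π. -/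
/-!
Write `t w` for the class of `w ∈ Fₙ` in the quotient of `S_{Fₙ}`.  The skein relations give
`t (ab) = t (ba)` and `t (ab) + t (ab⁻¹) = t a * t b`.  The heart of the matter is that the function
`f w = t (w v_l) - t (w u_l)` vanishes identically (`SkeinAux.eq_zero`).  It satisfies
`f (abc) + f (ab⁻¹c) = f (ac) * t b`, so whenever `f (ac) = 0`, replacing `b` by `b⁻¹` only changes
the sign of `f (abc)`; this sign rule (`SkeinAux.SignRule`) is all that is needed.  Modulo values of
`f` on shorter words it makes `f` antisymmetric under exchanging adjacent factors
(`SkeinAux.SignRule.swap`), while inverting a product `abc` gives `f (abcd) = f (cbad)`.  Reversing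
three factors is an odd permutation, so `2 f (abcd) = 0` (`SkeinAux.SignRule.triple`).  Thus `f`
vanishes on positive words by induction on the length, starting from words of length at most two,
and then on all words by the sign rule.

Hence `t (w u_l⁻¹ v_l) = t w` for all `w`; the `k` with `t (w k) = t w` for all `w` form a normal
subgroup, so `t` factors through `π`.  This yields the inverse of the map induced by `π`.
-/

noncomputable section

/-- The relations imposed on `S_{Fₙ}` by a presentation with relations `u_l = v_l`:
`[v_l] = [u_l]`, `[γᵢ v_l] = [γᵢ u_l]` and `[γⱼγₖ v_l] = [γⱼγₖ u_l]` for `l ∈ L`,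
`1 ≤ i ≤ n`, `1 ≤ j < k ≤ n`.  The quotient of `S_{Fₙ}` by the ring congruence generated by
these pairs is the quotient by the two-sided ideal generated by the corresponding
differences. -/
inductive PresRel' (n : ℕ) (L : Type) (u v : L → FreeGroup (Fin n)) :
    SkeinAlgebra (FreeGroup (Fin n)) → SkeinAlgebra (FreeGroup (Fin n)) → Prop
  | relation (l : L) :
      PresRel' n L u v (skeinClass (FreeGroup (Fin n)) (v l))
        (skeinClass (FreeGroup (Fin n)) (u l))
  | one_relation (l : L) (i : Fin n) :
      PresRel' n L u v (skeinClass (FreeGroup (Fin n)) (FreeGroup.of i * v l))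
        (skeinClass (FreeGroup (Fin n)) (FreeGroup.of i * u l))
  | two_relation (l : L) (j k : Fin n) (h : j < k) :
      PresRel' n L u v
        (skeinClass (FreeGroup (Fin n)) (FreeGroup.of j * FreeGroup.of k * v l))
        (skeinClass (FreeGroup (Fin n)) (FreeGroup.of j * FreeGroup.of k * u l))

namespace SkeinAux

/-! ### The sign rule and vanishing on words -/

/-- Changing `b` to `b⁻¹` in `f (a * b * c)` changes the sign whenever `f (a * c) = 0`. -/
def SignRule {G A : Type} [Group G] [AddCommGroup A] (f : G → A) : Prop :=
  ∀ a b c : G, f (a * c) = 0 → f (a * b⁻¹ * c) = -f (a * b * c)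

section Vanishing

variable {G A : Type} [Group G] [AddCommGroup A] {f : G → A}

/-- Adjacent factors anticommute under `f`, modulo values at shorter products. -/
lemma SignRule.swap (hf : SignRule f) (p a b d : G) (h : f (p * d) = 0)
    (ha : f (p * a * d) = 0) (hb : f (p * b * d) = 0) :
    f (p * a * b * d) = -f (p * b * a * d) := by
  have h1 := hf p (a * b) d h
  have h2 := hf p b d h
  rw [hb, neg_zero] at h2
  have h3 := hf (p * b⁻¹) a d h2
  have h4 := hf p b (a * d) (by simpa only [mul_assoc] using ha)
  simp only [mul_inv_rev, mul_assoc] at h1 h3 h4 ⊢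
  rw [h3, h4, neg_neg] at h1
  rw [h1, neg_neg]

/-- A triple product is, up to shorter products, both invariant and antisymmetric under the
reversal `abc ↦ cba`, so `f` vanishes on it when there is no 2-torsion. -/
lemma SignRule.triple (hf : SignRule f) (h2 : ∀ x : A, x = -x → x = 0) (a b c d : G)
    (h0 : f d = 0) (ha : f (a * d) = 0) (hb : f (b * d) = 0) (hc : f (c * d) = 0)
    (hba : f (b * a * d) = 0) (hca : f (c * a * d) = 0) (hcb : f (c * b * d) = 0)
    (hbc : f (b * c * d) = 0) (hac : f (a * c * d) = 0) :
    f (a * b * c * d) = 0 := by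
  have hinv : f (a * b * c * d) = f (c * b * a * d) := by
    have e1 := hf 1 (a * b * c) d (by simpa using h0)
    have k1 := hf 1 c d (by simpa using h0)
    have k2 := hf 1 c (a * d) (by simpa using ha)
    have k3 := hf 1 c (b * d) (by simpa using hb)
    have k4 := hf 1 c (b * (a * d)) (by simpa [mul_assoc] using hba)
    simp only [one_mul, mul_inv_rev, mul_assoc] at *
    rw [hc, neg_zero] at k1
    rw [hca, neg_zero] at k2
    rw [hcb, neg_zero] at k3
    have k5 := hf c⁻¹ b d k1
    simp only [mul_assoc] at k5
    rw [k3, neg_zero] at k5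
    have k6 := hf (c⁻¹ * b⁻¹) a d (by rwa [mul_assoc])
    have k7 := hf c⁻¹ b (a * d) k2
    simp only [mul_assoc] at k6 k7
    rw [k6, k7, k4, neg_neg] at e1
    exact (neg_injective e1).symm
  have s1 := hf.swap 1 c b (a * d) (by simpa using ha) (by simpa [mul_assoc] using hca)
    (by simpa [mul_assoc] using hba)
  have s2 := hf.swap b c a d hb hbc hba
  have s3 := hf.swap 1 b a (c * d) (by simpa using hc) (by simpa [mul_assoc] using hbc)
    (by simpa [mul_assoc] using hac)
  simp only [one_mul, mul_assoc] at *
  apply h2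
  nth_rewrite 1 [hinv, s1, s2, s3]
  simp

end Vanishing

variable {A : Type} [AddCommGroup A] {n : ℕ} {f : FreeGroup (Fin n) → A}

/-- The case of positive words, by induction on the length. -/
lemma eq_zero_pos (hf : SignRule f) (h2 : ∀ x : A, x = -x → x = 0) (h0 : f 1 = 0)
    (h1 : ∀ i, f (FreeGroup.of i) = 0)
    (hlt : ∀ j k, j < k → f (FreeGroup.of j * FreeGroup.of k) = 0) :
    ∀ (m : ℕ) (l : List (Fin n)), l.length ≤ m → f (l.map FreeGroup.of).prod = 0 := by
  intro m
  induction m with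
  | zero =>
    intro l hl
    obtain rfl : l = [] := by simpa using hl
    simpa using h0
  | succ m ih =>
    intro l hl
    match l, hl with
    | [], _ => simpa using h0
    | [i], _ => simpa using h1 i
    | [j, k], _ =>
      simp only [List.map_cons, List.map_nil, List.prod_cons, List.prod_nil, mul_one]
      rcases lt_trichotomy j k with h | rfl | h
      · exact hlt j k h
      · have := hf (FreeGroup.of j) (FreeGroup.of j) 1 (by simpa using h1 j)
        simpa [h0] using this
      · have := hf.swap 1 (FreeGroup.of j) (FreeGroup.of k) 1 (by simpa using h0)
          (by simpa using h1 j) (by simpa using h1 k)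
        simpa [hlt k j h] using this
    | a :: b :: c :: l, hl =>
      simp only [List.length_cons] at hl
      have q0 := ih l (by omega)
      have q1 : ∀ x, f (FreeGroup.of x * (l.map FreeGroup.of).prod) = 0 := fun x => by
        simpa using ih (x :: l) (by simp only [List.length_cons]; omega)
      have q2 : ∀ x y, f (FreeGroup.of x * FreeGroup.of y * (l.map FreeGroup.of).prod) = 0 :=
        fun x y => by
          simpa [mul_assoc] using ih (x :: y :: l) (by simp only [List.length_cons]; omega)
      simpa [mul_assoc] using hf.triple h2 (FreeGroup.of a) (FreeGroup.of b) (FreeGroup.of c)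
        (l.map FreeGroup.of).prod q0 (q1 _) (q1 _) (q1 _) (q2 _ _) (q2 _ _) (q2 _ _) (q2 _ _)
        (q2 _ _)

/-- A function on `Fₙ` obeying the sign rule vanishes if it vanishes at `1`, `γᵢ` and `γⱼγₖ`
for `j < k`. -/
lemma eq_zero (hf : SignRule f) (h2 : ∀ x : A, x = -x → x = 0) (h0 : f 1 = 0)
    (h1 : ∀ i, f (FreeGroup.of i) = 0)
    (hlt : ∀ j k, j < k → f (FreeGroup.of j * FreeGroup.of k) = 0)
    (w : FreeGroup (Fin n)) : f w = 0 := by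
  -- A positive word on the left is carried along, since each negative letter is traded for a positive one.
  have key : ∀ (L : List (Fin n × Bool)) (l : List (Fin n)),
      f ((l.map FreeGroup.of).prod * FreeGroup.mk L) = 0 := by
    intro L
    induction L with
    | nil =>
      intro l
      rw [← FreeGroup.one_eq_mk, mul_one]
      exact eq_zero_pos hf h2 h0 h1 hlt _ l le_rfl
    | cons x L ih =>
      intro l
      obtain ⟨i, s⟩ := x
      have hpos : f ((l.map FreeGroup.of).prod * FreeGroup.of i * FreeGroup.mk L) = 0 := by
        simpa using ih (l ++ [i])
      cases s with
      | true =>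
        have e : FreeGroup.mk ((i, true) :: L) = FreeGroup.of i * FreeGroup.mk L := by
          simp [FreeGroup.of, FreeGroup.mul_mk]
        rw [e, ← mul_assoc]
        exact hpos
      | false =>
        have e : FreeGroup.mk ((i, false) :: L) = (FreeGroup.of i)⁻¹ * FreeGroup.mk L := by
          simp [FreeGroup.of, FreeGroup.mul_mk, FreeGroup.inv_mk, FreeGroup.invRev]
        rw [e, ← mul_assoc, hf _ _ _ (ih l), hpos, neg_zero]
  have := key w.toWord []
  simpa [FreeGroup.mk_toWord] using this

/-- Two elements that a trace-like function does not distinguish after multiplication by `1`, `γᵢ`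
and `γⱼγₖ` for `j < k` are not distinguished after multiplication by any word. -/
lemma eq_of_short_words {B : Type} [Ring B] [Algebra ℂ B] {t : FreeGroup (Fin n) → B}
    (hc : ∀ a b, t (a * b) = t (b * a)) (hm : ∀ a b, t a * t b = t (a * b) + t (a * b⁻¹))
    {x y : FreeGroup (Fin n)} (h0 : t x = t y)
    (h1 : ∀ i, t (FreeGroup.of i * x) = t (FreeGroup.of i * y))
    (hlt : ∀ j k, j < k →
      t (FreeGroup.of j * FreeGroup.of k * x) = t (FreeGroup.of j * FreeGroup.of k * y))
    (w : FreeGroup (Fin n)) : t (w * x) = t (w * y) := by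
  have split : ∀ a b c, t (a * b * c) + t (a * b⁻¹ * c) = t (a * c) * t b := fun a b c => by
    rw [hc (a * b) c, hc (a * b⁻¹) c, hc a c, hm, mul_assoc, mul_assoc]
  have hf : SignRule fun w => t (w * x) - t (w * y) := by
    intro a b c h
    have hx := split a b (c * x)
    have hy := split a b (c * y)
    simp only [mul_assoc] at hx hy h ⊢
    rw [sub_eq_zero.mp h, ← hy] at hx
    rw [eq_neg_iff_add_eq_zero, ← sub_eq_zero.mpr hx]
    abel
  refine sub_eq_zero.mp (eq_zero hf ?_ ?_ ?_ ?_ w)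
  · intro z hz
    have h : (2 : ℂ) • z = 0 := by
      rw [two_smul]
      nth_rewrite 1 [hz]
      simp
    exact (smul_eq_zero_iff_right two_ne_zero).mp h
  · rw [one_mul, one_mul]
    exact sub_eq_zero.mpr h0
  · exact fun i => sub_eq_zero.mpr (h1 i)
  · exact fun j k h => sub_eq_zero.mpr (hlt j k h)

/-! ### Trace identities and the universal property of the skein algebra -/

section SkeinClass

variable (G : Type) [Group G]

lemma skeinClass_one : skeinClass G 1 = 2 := by
  rw [skeinClass, RingQuot.mkAlgHom_rel ℂ (SkeinRel.unit (G := G)), map_ofNat]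

lemma skeinClass_comm (a b : G) :
    skeinClass G a * skeinClass G b = skeinClass G b * skeinClass G a := by
  simpa [skeinClass] using RingQuot.mkAlgHom_rel ℂ (SkeinRel.comm a b)

lemma skeinClass_mul (a b : G) :
    skeinClass G a * skeinClass G b = skeinClass G (a * b) + skeinClass G (a * b⁻¹) := by
  simpa [skeinClass] using RingQuot.mkAlgHom_rel ℂ (SkeinRel.mul a b)

lemma skeinClass_inv (a : G) : skeinClass G a⁻¹ = skeinClass G a := by
  have h := skeinClass_mul G 1 a
  rw [skeinClass_one, one_mul, one_mul, two_mul] at h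
  exact (add_left_cancel h).symm

lemma skeinClass_mul_comm (a b : G) : skeinClass G (a * b) = skeinClass G (b * a) := by
  have h := skeinClass_comm G a b
  rw [skeinClass_mul, skeinClass_mul, ← skeinClass_inv G (b * a⁻¹), mul_inv_rev, inv_inv] at h
  exact add_right_cancel h

variable {G} {B : Type} [Ring B] [Algebra ℂ B]

/-- The universal property of `S_G`: a function on `G` satisfying the skein relations extends to
an algebra homomorphism. -/
def lift (t : G → B) (h1 : t 1 = 2) (hc : ∀ a b, t a * t b = t b * t a)
    (hm : ∀ a b, t a * t b = t (a * b) + t (a * b⁻¹)) : SkeinAlgebra G →ₐ[ℂ] B :=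
  RingQuot.liftAlgHom ℂ ⟨TensorAlgebra.lift ℂ (Finsupp.linearCombination ℂ t ∘ₗ
      (MonoidAlgebra.coeffLinearEquiv ℂ).toLinearMap), by
    have hg : ∀ g, TensorAlgebra.lift ℂ (Finsupp.linearCombination ℂ t ∘ₗ
      (MonoidAlgebra.coeffLinearEquiv ℂ).toLinearMap) (skeinGen G g) = t g := by
      intro g
      simp [skeinGen]
    intro x y h
    cases h with
    | unit => rw [hg, h1, map_ofNat]
    | comm a b => simp only [map_mul, hg, hc a b]
    | mul a b => simp only [map_mul, map_add, hg, hm a b]⟩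

lemma lift_skeinClass (t : G → B) (h1 : t 1 = 2) (hc : ∀ a b, t a * t b = t b * t a)
    (hm : ∀ a b, t a * t b = t (a * b) + t (a * b⁻¹)) (g : G) :
    lift t h1 hc hm (skeinClass G g) = t g := by
  simp [lift, skeinClass, skeinGen]

lemma algHom_ext {p q : SkeinAlgebra G →ₐ[ℂ] B}
    (h : ∀ g, p (skeinClass G g) = q (skeinClass G g)) : p = q := by
  apply RingQuot.ringQuot_ext'
  apply TensorAlgebra.hom_ext
  apply MonoidAlgebra.lhom_ext'
  intro g
  ext
  exact h g

end SkeinClass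

/-! ### Classes of words modulo the presentation relations -/

/-- The class of a word in the quotient of `S_{Fₙ}` attached to the presentation. -/
def presClass {L : Type} (u v : L → FreeGroup (Fin n)) (w : FreeGroup (Fin n)) :
    RingQuot (PresRel' n L u v) :=
  RingQuot.mkAlgHom ℂ (PresRel' n L u v) (skeinClass (FreeGroup (Fin n)) w)

variable {L : Type} (u v : L → FreeGroup (Fin n))

lemma presClass_one : presClass u v 1 = 2 := by
  rw [presClass, skeinClass_one, map_ofNat]

lemma presClass_comm (a b : FreeGroup (Fin n)) :
    presClass u v a * presClass u v b = presClass u v b * presClass u v a := by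
  simp only [presClass, ← map_mul, skeinClass_comm _ a b]

lemma presClass_mul (a b : FreeGroup (Fin n)) :
    presClass u v a * presClass u v b = presClass u v (a * b) + presClass u v (a * b⁻¹) := by
  simp only [presClass, ← map_mul, ← map_add, skeinClass_mul _ a b]

lemma presClass_mul_comm (a b : FreeGroup (Fin n)) :
    presClass u v (a * b) = presClass u v (b * a) := by
  simp only [presClass, skeinClass_mul_comm _ a b]

lemma presClass_relation (l : L) (w : FreeGroup (Fin n)) :
    presClass u v (w * v l) = presClass u v (w * u l) := by
  refine eq_of_short_words (presClass_mul_comm u v) (presClass_mul u v) ?_ ?_ ?_ w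
  · exact RingQuot.mkAlgHom_rel ℂ (PresRel'.relation l)
  · exact fun i => RingQuot.mkAlgHom_rel ℂ (PresRel'.one_relation l i)
  · exact fun j k h => RingQuot.mkAlgHom_rel ℂ (PresRel'.two_relation l j k h)

/-- The elements by which words can be multiplied without changing their classes. -/
def periods : Subgroup (FreeGroup (Fin n)) where
  carrier := {k | ∀ w, presClass u v (w * k) = presClass u v w}
  one_mem' := fun w => by rw [mul_one]
  mul_mem' := fun {a b} ha hb w => by rw [← mul_assoc, hb, ha]
  inv_mem' := fun {a} ha w => by rw [← ha (w * a⁻¹), inv_mul_cancel_right]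

instance periods_normal : (periods u v).Normal where
  conj_mem k hk g w := by
    have h := hk (g⁻¹ * w * g)
    rw [← mul_assoc, ← mul_assoc, presClass_mul_comm u v (w * g * k), ← mul_assoc, ← mul_assoc, h,
      mul_assoc, presClass_mul_comm, mul_assoc, mul_inv_cancel, mul_one]

/-- The class of a word depends only on its image under `π`. -/
lemma presClass_eq {Γ : Type} [Group Γ] (π : FreeGroup (Fin n) →* Γ)
    (hker : π.ker = Subgroup.normalClosure (Set.range fun l : L => (u l)⁻¹ * v l))
    {x y : FreeGroup (Fin n)} (h : π x = π y) : presClass u v x = presClass u v y := by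
  have hle : π.ker ≤ periods u v := by
    rw [hker]
    apply Subgroup.normalClosure_le_normal
    rintro _ ⟨l, rfl⟩ w
    rw [← mul_assoc, presClass_relation, inv_mul_cancel_right]
  have hk : y⁻¹ * x ∈ π.ker := by
    rw [MonoidHom.mem_ker, map_mul, map_inv, h, inv_mul_cancel]
  have := hle hk y
  rwa [mul_inv_cancel_left] at this

end SkeinAux

/-! ### The isomorphism induced by `π` -/

/-- **Addendum.**  Let `Γ = ⟨γ₁, …, γₙ ∣ u_l = v_l, l ∈ L⟩` be a finitely generated group,
i.e. `π : Fₙ ↠ Γ` is surjective with kernel the normal closure of the elements `u_l⁻¹ v_l`.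
Then `S_Γ ≅ S_{Fₙ} / ([v_l] − [u_l], [γᵢ v_l] − [γᵢ u_l], [γⱼγₖ v_l] − [γⱼγₖ u_l])`,
the isomorphism being induced by `π`. -/
theorem skeinAlgebra_of_presentation_two_words (n : ℕ) (L : Type)
    (u v : L → FreeGroup (Fin n))
    (Γ : Type) [Group Γ] (π : FreeGroup (Fin n) →* Γ)
    (hsurj : Function.Surjective π)
    (hker : π.ker = Subgroup.normalClosure (Set.range fun l : L => (u l)⁻¹ * v l)) :
    ∃ e : RingQuot (PresRel' n L u v) ≃ₐ[ℂ] SkeinAlgebra Γ,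
      ∀ w : FreeGroup (Fin n),
        e (RingQuot.mkAlgHom ℂ (PresRel' n L u v) (skeinClass (FreeGroup (Fin n)) w)) =
          skeinClass Γ (π w) := by
  have hπ : ∀ l, π (u l) = π (v l) := fun l => by
    have hmem : (u l)⁻¹ * v l ∈ π.ker := by
      rw [hker]
      exact Subgroup.subset_normalClosure ⟨l, rfl⟩
    rwa [MonoidHom.mem_ker, map_mul, map_inv, inv_mul_eq_one] at hmem
  let p₀ : SkeinAlgebra (FreeGroup (Fin n)) →ₐ[ℂ] SkeinAlgebra Γ :=
    SkeinAux.lift (fun w => skeinClass Γ (π w))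
      (by rw [map_one, SkeinAux.skeinClass_one])
      (fun a b => SkeinAux.skeinClass_comm Γ _ _)
      (fun a b => by rw [map_mul, map_mul, map_inv, SkeinAux.skeinClass_mul])
  have hp₀ : ∀ w, p₀ (skeinClass _ w) = skeinClass Γ (π w) := SkeinAux.lift_skeinClass _ _ _ _
  let p : RingQuot (PresRel' n L u v) →ₐ[ℂ] SkeinAlgebra Γ :=
    RingQuot.liftAlgHom ℂ ⟨p₀, by
      intro x y h
      cases h <;> simp only [hp₀, map_mul, hπ]⟩
  have hp : ∀ w, p (SkeinAux.presClass u v w) = skeinClass Γ (π w) := fun w => by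
    rw [← hp₀ w]
    exact RingQuot.liftAlgHom_mkAlgHom_apply ..
  obtain ⟨s, hs⟩ := hsurj.hasRightInverse
  let q : SkeinAlgebra Γ →ₐ[ℂ] RingQuot (PresRel' n L u v) :=
    SkeinAux.lift (fun g => SkeinAux.presClass u v (s g))
      (by
        rw [← SkeinAux.presClass_one u v]
        exact SkeinAux.presClass_eq u v π hker (by rw [hs, map_one]))
      (fun a b => SkeinAux.presClass_comm u v _ _)
      (fun a b => by
        rw [SkeinAux.presClass_mul]
        congr 1 <;> exact SkeinAux.presClass_eq u v π hker (by simp [hs _]))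
  have hq : ∀ g, q (skeinClass Γ g) = SkeinAux.presClass u v (s g) :=
    SkeinAux.lift_skeinClass _ _ _ _
  refine ⟨AlgEquiv.ofAlgHom p q ?_ ?_, hp⟩
  · refine SkeinAux.algHom_ext fun g => ?_
    rw [AlgHom.comp_apply, hq, hp, hs g, AlgHom.id_apply]
  · apply RingQuot.ringQuot_ext'
    refine SkeinAux.algHom_ext (B := RingQuot (PresRel' n L u v)) fun w => ?_
    change q (p (SkeinAux.presClass u v w)) = SkeinAux.presClass u v w
    rw [hp, hq]
    exact SkeinAux.presClass_eq u v π hker (hs _)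

end
end

section
/- Let π : Fₙ ↠ Γ be a surjective group homomorphism from the free group Fₙ onto a group Γ, and let K ⊂ S_{Fₙ} be the two-sided ideal generated by all elements [α] − [α′] with α, α′ ∈ Fₙ satisfying π(α) = π(α′). Then the map S_{Fₙ}/K → S_Γ induced by π is an isomorphism of ℂ-algebras. -/
/-!
Each algebra involved is presented by generators `[g]` and relations, so algebra maps out of it can
be written down on generators (`exists_skeinHom`) and are determined by them (`skeinHom_ext`). The
map induced by `π` sends `[α]` to `[π α]`; it kills the relations `[α] = [α′]` and so descends to the
quotient. For the inverse, choose a set-theoretic section `s` of `π` and send `[γ]` to the class of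
`[s γ]`. Modulo the kernel relations the class of `[α]` depends only on `π α`, hence this assignment
respects the skein relations although `s` is not multiplicative. The two maps are mutually inverse
on generators.
-/

noncomputable section

/-- The relations `[α] = [α′]` for `α, α′ ∈ Fₙ` with `π(α) = π(α′)`.  The quotient of
`S_{Fₙ}` by the ring congruence generated by these pairs is the quotient of `S_{Fₙ}` by the
two-sided ideal `K` generated by the differences `[α] − [α′]`. -/
inductive KernelRel (n : ℕ) (Γ : Type) [Group Γ] (π : FreeGroup (Fin n) →* Γ) :
    SkeinAlgebra (FreeGroup (Fin n)) → SkeinAlgebra (FreeGroup (Fin n)) → Prop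
  | rel (α α' : FreeGroup (Fin n)) (h : π α = π α') :
      KernelRel n Γ π (skeinClass (FreeGroup (Fin n)) α) (skeinClass (FreeGroup (Fin n)) α')

/-- Existence half of the universal property of the skein algebra. -/
theorem exists_skeinHom {G A : Type} [Group G] [Semiring A] [Algebra ℂ A] (f : G → A)
    (h1 : f 1 = 2) (hc : ∀ a b, f a * f b = f b * f a)
    (hm : ∀ a b, f a * f b = f (a * b) + f (a * b⁻¹)) :
    ∃ φ : SkeinAlgebra G →ₐ[ℂ] A, ∀ g, φ (skeinClass G g) = f g := by
  let L : MonoidAlgebra ℂ G →ₗ[ℂ] A :=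
    (Finsupp.linearCombination ℂ f).comp (MonoidAlgebra.coeffLinearEquiv ℂ).toLinearMap
  have hL : ∀ g, TensorAlgebra.lift ℂ L (skeinGen G g) = f g := by
    intro g
    rw [skeinGen, TensorAlgebra.lift_ι_apply]
    simp [L]
  refine ⟨RingQuot.liftAlgHom ℂ ⟨TensorAlgebra.lift ℂ L, ?_⟩, fun g => ?_⟩
  · rintro _ _ (_ | ⟨a, b⟩ | ⟨a, b⟩)
    · rw [hL, h1, map_ofNat]
    · rw [map_mul, map_mul, hL, hL, hc]
    · rw [map_mul, map_add, hL, hL, hL, hL, hm]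
  · rw [skeinClass, RingQuot.liftAlgHom_mkAlgHom_apply, hL]

/-- Uniqueness half of the universal property of the skein algebra. -/
theorem skeinHom_ext {G A : Type} [Group G] [Semiring A] [Algebra ℂ A]
    {φ ψ : SkeinAlgebra G →ₐ[ℂ] A} (h : ∀ g, φ (skeinClass G g) = ψ (skeinClass G g)) :
    φ = ψ := by
  apply RingQuot.ringQuot_ext'
  apply TensorAlgebra.hom_ext
  apply MonoidAlgebra.lhom_ext'
  intro g
  apply LinearMap.ext_ring
  exact h g

theorem skeinClass_one (G : Type) [Group G] : skeinClass G 1 = 2 := by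
  rw [skeinClass, RingQuot.mkAlgHom_rel ℂ SkeinRel.unit, map_ofNat]

theorem skeinClass_comm (G : Type) [Group G] (a b : G) :
    skeinClass G a * skeinClass G b = skeinClass G b * skeinClass G a := by
  simp only [skeinClass]
  rw [← map_mul, ← map_mul, RingQuot.mkAlgHom_rel ℂ (SkeinRel.comm a b)]

theorem skeinClass_mul (G : Type) [Group G] (a b : G) :
    skeinClass G a * skeinClass G b = skeinClass G (a * b) + skeinClass G (a * b⁻¹) := by
  simp only [skeinClass]
  rw [← map_mul, ← map_add, RingQuot.mkAlgHom_rel ℂ (SkeinRel.mul a b)]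

/-- Let `π : Fₙ ↠ Γ` be a surjective group homomorphism and let `K ⊂ S_{Fₙ}` be the
two-sided ideal generated by the elements `[α] − [α′]` with `π(α) = π(α′)`.  Then the map
`S_{Fₙ}/K → S_Γ` induced by `π` (i.e. the unique algebra map sending the class of `[α]` to
`[π α]`) is an isomorphism of `ℂ`-algebras. -/
theorem skeinAlgebra_quotient_kernel_iso (n : ℕ) (Γ : Type) [Group Γ]
    (π : FreeGroup (Fin n) →* Γ) (hsurj : Function.Surjective π) :
    ∃ e : RingQuot (KernelRel n Γ π) ≃ₐ[ℂ] SkeinAlgebra Γ,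
      ∀ α : FreeGroup (Fin n),
        e (RingQuot.mkAlgHom ℂ (KernelRel n Γ π) (skeinClass (FreeGroup (Fin n)) α)) =
          skeinClass Γ (π α) := by
  obtain ⟨s, hs⟩ := hsurj.hasRightInverse
  obtain ⟨p, hp⟩ := exists_skeinHom (fun α => skeinClass Γ (π α))
    (by rw [map_one, skeinClass_one]) (fun a b => skeinClass_comm Γ _ _)
    (fun a b => by rw [skeinClass_mul, map_mul, map_mul, map_inv])
  let q : SkeinAlgebra (FreeGroup (Fin n)) →ₐ[ℂ] RingQuot (KernelRel n Γ π) :=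
    RingQuot.mkAlgHom ℂ (KernelRel n Γ π)
  have hq : ∀ α α', π α = π α' → q (skeinClass _ α) = q (skeinClass _ α') := fun α α' h =>
    RingQuot.mkAlgHom_rel ℂ (KernelRel.rel α α' h)
  have hpr : ∀ ⦃x y⦄, KernelRel n Γ π x y → p x = p y := by
    rintro _ _ ⟨α, α', h⟩
    rw [hp, hp, h]
  let φ : RingQuot (KernelRel n Γ π) →ₐ[ℂ] SkeinAlgebra Γ := RingQuot.liftAlgHom ℂ ⟨p, hpr⟩
  have hφ : ∀ α, φ (q (skeinClass _ α)) = skeinClass Γ (π α) := fun α =>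
    (RingQuot.liftAlgHom_mkAlgHom_apply ℂ p hpr _).trans (hp α)
  obtain ⟨ψ, hψ⟩ := exists_skeinHom (fun γ => q (skeinClass _ (s γ)))
    (by rw [hq (s 1) 1 (by rw [hs, map_one]), skeinClass_one, map_ofNat])
    (fun a b => by rw [← map_mul, ← map_mul, skeinClass_comm])
    (fun a b => by
      rw [← map_mul, skeinClass_mul, map_add,
        hq (s (a * b)) (s a * s b) (by rw [map_mul, hs, hs, hs]),
        hq (s (a * b⁻¹)) (s a * (s b)⁻¹) (by rw [map_mul, map_inv, hs, hs, hs])])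
  refine ⟨AlgEquiv.ofAlgHom φ ψ ?_ ?_, hφ⟩
  · apply skeinHom_ext
    intro γ
    rw [AlgHom.comp_apply, hψ, hφ, hs, AlgHom.id_apply]
  · apply RingQuot.ringQuot_ext'
    apply skeinHom_ext
    intro α
    change ψ (φ (q (skeinClass _ α))) = q (skeinClass _ α)
    rw [hφ, hψ]
    exact hq _ _ (hs _)

end
end

section
/- Let Γ be a group and ρ : Γ → SL₂(ℂ) a group homomorphism. Then the image ρ(Γ) spans the ℂ-vector space M₂(ℂ) of 2×2 complex matrices if and only if there exist γ₁, γ₂, γ₃ ∈ Γ such that tr(ρ(γ₁)ρ(γ₂)ρ(γ₃)) ≠ tr(ρ(γ₁)ρ(γ₃)ρ(γ₂)). -/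
/-!
The trilinear form `t(A, B, C) = tr(ABC) - tr(ACB) = tr(A[B, C])` on `M₂(ℂ)` is alternating and
vanishes as soon as one argument is scalar, so it is, up to a constant, the determinant of
`(1, A, B, C)`. Since `1 = ρ(1)` lies in the image, three elements of the image with `t ≠ 0` yield a
basis `1, ρ(γ₁), ρ(γ₂), ρ(γ₃)`; this is made explicit by Cramer's rule (`traceForm_cramer`).
Conversely, if `t` vanishes on the image, it vanishes on the span by trilinearity
(`traceForm_eq_zero_of_mem_span`), which is therefore proper because `t` is nonzero on `M₂(ℂ)`.
-/

/-- The alternating trilinear form `tr(ABC) - tr(ACB)` on `2 × 2` complex matrices. -/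
def traceForm (A B C : Matrix (Fin 2) (Fin 2) ℂ) : ℂ :=
  (A * B * C).trace - (A * C * B).trace

/-- Cramer's rule in `M₂(ℂ)` with respect to `1, A, B, C`. The coefficient of `1` is determined by
comparing traces. -/
lemma traceForm_cramer (A B C X : Matrix (Fin 2) (Fin 2) ℂ) :
    traceForm A B C • X =
      ((traceForm A B C * X.trace - traceForm X B C * A.trace - traceForm A X C * B.trace
          - traceForm A B X * C.trace) / 2) • (1 : Matrix (Fin 2) (Fin 2) ℂ)
        + traceForm X B C • A + traceForm A X C • B + traceForm A B X • C := by
  ext i j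
  fin_cases i <;> fin_cases j <;>
    simp [traceForm, Matrix.trace, Matrix.mul_apply, Fin.sum_univ_two] <;> ring

lemma traceForm_rotate (A B C : Matrix (Fin 2) (Fin 2) ℂ) :
    traceForm B C A = traceForm A B C := by
  simp only [traceForm, Matrix.trace, Matrix.diag, Matrix.mul_apply, Fin.sum_univ_two]
  ring

lemma traceForm_eq_zero_of_mem_span_left {S : Set (Matrix (Fin 2) (Fin 2) ℂ)}
    {B C : Matrix (Fin 2) (Fin 2) ℂ} (h : ∀ A ∈ S, traceForm A B C = 0)
    {A : Matrix (Fin 2) (Fin 2) ℂ} (hA : A ∈ Submodule.span ℂ S) : traceForm A B C = 0 := by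
  induction hA using Submodule.span_induction with
  | mem x hx => exact h x hx
  | zero => simp [traceForm]
  | add x y _ _ hx hy =>
    simp only [traceForm, add_mul, Matrix.trace_add] at *
    linear_combination hx + hy
  | smul a x _ hx =>
    simp only [traceForm, smul_mul_assoc, Matrix.trace_smul, smul_eq_mul] at *
    linear_combination a * hx

lemma traceForm_eq_zero_of_mem_span {S : Set (Matrix (Fin 2) (Fin 2) ℂ)}
    (h : ∀ A ∈ S, ∀ B ∈ S, ∀ C ∈ S, traceForm A B C = 0)
    {A B C : Matrix (Fin 2) (Fin 2) ℂ} (hA : A ∈ Submodule.span ℂ S)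
    (hB : B ∈ Submodule.span ℂ S) (hC : C ∈ Submodule.span ℂ S) : traceForm A B C = 0 := by
  refine traceForm_eq_zero_of_mem_span_left (fun A hA => ?_) hA
  rw [← traceForm_rotate]
  refine traceForm_eq_zero_of_mem_span_left (fun B hB => ?_) hB
  rw [← traceForm_rotate]
  refine traceForm_eq_zero_of_mem_span_left (fun C hC => ?_) hC
  rw [← traceForm_rotate]
  exact h A hA B hB C hC

/-- A representation `ρ : Γ → SL₂(ℂ)` is simple (its image spans `M₂(ℂ)` as a
`ℂ`-vector space) if and only if there exist `γ₁, γ₂, γ₃ ∈ Γ` with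
`tr(ρ(γ₁)ρ(γ₂)ρ(γ₃)) ≠ tr(ρ(γ₁)ρ(γ₃)ρ(γ₂))`. -/
theorem simple_iff_exists_trace_ne (Γ : Type) [Group Γ]
    (ρ : Γ →* Matrix.SpecialLinearGroup (Fin 2) ℂ) :
    Submodule.span ℂ (Set.range fun γ : Γ => (ρ γ : Matrix (Fin 2) (Fin 2) ℂ)) = ⊤ ↔
      ∃ γ₁ γ₂ γ₃ : Γ,
        ((ρ γ₁ : Matrix (Fin 2) (Fin 2) ℂ) * (ρ γ₂ : Matrix (Fin 2) (Fin 2) ℂ)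
            * (ρ γ₃ : Matrix (Fin 2) (Fin 2) ℂ)).trace ≠
          ((ρ γ₁ : Matrix (Fin 2) (Fin 2) ℂ) * (ρ γ₃ : Matrix (Fin 2) (Fin 2) ℂ)
            * (ρ γ₂ : Matrix (Fin 2) (Fin 2) ℂ)).trace := by
  constructor
  · intro hspan
    by_contra! h
    have h0 : traceForm !![0, 0; 1, 0] !![1, 0; 0, 0] !![0, 1; 0, 0] = 0 := by
      refine traceForm_eq_zero_of_mem_span
        (S := Set.range fun γ : Γ => (ρ γ : Matrix (Fin 2) (Fin 2) ℂ)) ?_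
        (by rw [hspan]; trivial) (by rw [hspan]; trivial) (by rw [hspan]; trivial)
      rintro _ ⟨a, rfl⟩ _ ⟨b, rfl⟩ _ ⟨c, rfl⟩
      exact sub_eq_zero.mpr (h a b c)
    simp [traceForm, Matrix.trace_fin_two] at h0
  · rintro ⟨a, b, c, h⟩
    have ht : traceForm (ρ a) (ρ b) (ρ c) ≠ 0 := sub_ne_zero.mpr h
    have hmem (γ : Γ) : (ρ γ : Matrix (Fin 2) (Fin 2) ℂ) ∈
        Submodule.span ℂ (Set.range fun γ : Γ => (ρ γ : Matrix (Fin 2) (Fin 2) ℂ)) :=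
      Submodule.subset_span ⟨γ, rfl⟩
    have hone : (1 : Matrix (Fin 2) (Fin 2) ℂ) ∈
        Submodule.span ℂ (Set.range fun γ : Γ => (ρ γ : Matrix (Fin 2) (Fin 2) ℂ)) := by
      simpa using hmem 1
    refine eq_top_iff.mpr fun X _ => ?_
    rw [← Submodule.smul_mem_iff _ ht, traceForm_cramer]
    exact add_mem (add_mem (add_mem (Submodule.smul_mem _ _ hone)
      (Submodule.smul_mem _ _ (hmem a))) (Submodule.smul_mem _ _ (hmem b)))
      (Submodule.smul_mem _ _ (hmem c))
end

section
/- For all A, B, C, D ∈ SL₂(ℂ) one has the Vogt identity: 2 tr(ABCD) = tr(A)tr(B)tr(C)tr(D) − tr(C)tr(D)tr(AB) − tr(B)tr(C)tr(AD) − tr(A)tr(D)tr(BC) − tr(A)tr(B)tr(CD) + tr(AD)tr(BC) − tr(AC)tr(BD) + tr(AB)tr(CD) + tr(D)tr(ABC) + tr(C)tr(ABD) + tr(B)tr(ACD) + tr(A)tr(BCD). -/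
/-- **Vogt's trace identity.** For all `A, B, C, D ∈ SL₂(ℂ)`:
`2 tr(ABCD) = tr A tr B tr C tr D − tr C tr D tr(AB) − tr B tr C tr(AD) − tr A tr D tr(BC)
 − tr A tr B tr(CD) + tr(AD)tr(BC) − tr(AC)tr(BD) + tr(AB)tr(CD) + tr D tr(ABC)
 + tr C tr(ABD) + tr B tr(ACD) + tr A tr(BCD)`. -/
theorem vogt_identity (A B C D : Matrix.SpecialLinearGroup (Fin 2) ℂ) :
    2 * ((A : Matrix (Fin 2) (Fin 2) ℂ) * B * C * D).trace =
      (A : Matrix (Fin 2) (Fin 2) ℂ).trace * (B : Matrix (Fin 2) (Fin 2) ℂ).trace *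
          (C : Matrix (Fin 2) (Fin 2) ℂ).trace * (D : Matrix (Fin 2) (Fin 2) ℂ).trace
        - (C : Matrix (Fin 2) (Fin 2) ℂ).trace * (D : Matrix (Fin 2) (Fin 2) ℂ).trace *
          ((A : Matrix (Fin 2) (Fin 2) ℂ) * B).trace
        - (B : Matrix (Fin 2) (Fin 2) ℂ).trace * (C : Matrix (Fin 2) (Fin 2) ℂ).trace *
          ((A : Matrix (Fin 2) (Fin 2) ℂ) * D).trace
        - (A : Matrix (Fin 2) (Fin 2) ℂ).trace * (D : Matrix (Fin 2) (Fin 2) ℂ).trace *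
          ((B : Matrix (Fin 2) (Fin 2) ℂ) * C).trace
        - (A : Matrix (Fin 2) (Fin 2) ℂ).trace * (B : Matrix (Fin 2) (Fin 2) ℂ).trace *
          ((C : Matrix (Fin 2) (Fin 2) ℂ) * D).trace
        + ((A : Matrix (Fin 2) (Fin 2) ℂ) * D).trace * ((B : Matrix (Fin 2) (Fin 2) ℂ) * C).trace
        - ((A : Matrix (Fin 2) (Fin 2) ℂ) * C).trace * ((B : Matrix (Fin 2) (Fin 2) ℂ) * D).trace
        + ((A : Matrix (Fin 2) (Fin 2) ℂ) * B).trace * ((C : Matrix (Fin 2) (Fin 2) ℂ) * D).trace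
        + (D : Matrix (Fin 2) (Fin 2) ℂ).trace * ((A : Matrix (Fin 2) (Fin 2) ℂ) * B * C).trace
        + (C : Matrix (Fin 2) (Fin 2) ℂ).trace * ((A : Matrix (Fin 2) (Fin 2) ℂ) * B * D).trace
        + (B : Matrix (Fin 2) (Fin 2) ℂ).trace * ((A : Matrix (Fin 2) (Fin 2) ℂ) * C * D).trace
        + (A : Matrix (Fin 2) (Fin 2) ℂ).trace * ((B : Matrix (Fin 2) (Fin 2) ℂ) * C * D).trace := by
  -- Both sides are multilinear in the four matrices and `SL₂(ℂ)` spans the `2 × 2` matrices, so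
  -- the identity holds for arbitrary `2 × 2` matrices: it is polynomial in the entries, and the
  -- determinant condition plays no role.
  simp only [Matrix.trace_fin_two, Matrix.mul_apply, Fin.sum_univ_two]
  ring
end

section
/- For all A, B, C, D ∈ SL₂(ℂ) one has: 2( tr(ABCD) − tr(ABC) ) = ( tr(ABC) − tr(A)tr(BC) − tr(C)tr(AB) + tr(A)tr(B)tr(C) )·( tr(D) − 2 ) + ( tr(AB) − tr(A)tr(B) )·( tr(CD) − tr(C) ) − tr(AC)·( tr(BD) − tr(B) ) + ( tr(BC) − tr(B)tr(C) )·( tr(AD) − tr(A) ) + tr(A)·( tr(BCD) − tr(BC) ) + tr(B)·( tr(ACD) − tr(AC) ) + tr(C)·( tr(ABD) − tr(AB) ). -/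
/-!
Every term of the identity is linear in each of `A`, `B`, `C`, and both sides are the values at
`D - 1` of linear forms in `D`. The identity is therefore Vogt's multilinear expression of
`2 tr(ABCD)` in traces of shorter words, applied to `A, B, C, D - 1`. As a multilinear consequence
of the Cayley-Hamilton theorem it holds for all `2 × 2` matrices: after expansion in the matrix
entries it is an identity of polynomials.
-/

/-- For all `A, B, C, D ∈ SL₂(ℂ)`:
`2(tr(ABCD) − tr(ABC)) = (tr(ABC) − tr A tr(BC) − tr C tr(AB) + tr A tr B tr C)(tr D − 2)
 + (tr(AB) − tr A tr B)(tr(CD) − tr C) − tr(AC)(tr(BD) − tr B)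
 + (tr(BC) − tr B tr C)(tr(AD) − tr A) + tr A (tr(BCD) − tr(BC))
 + tr B (tr(ACD) − tr(AC)) + tr C (tr(ABD) − tr(AB))`. -/
theorem trace_word_length_reduction (A B C D : Matrix.SpecialLinearGroup (Fin 2) ℂ) :
    2 * (((A : Matrix (Fin 2) (Fin 2) ℂ) * B * C * D).trace
        - ((A : Matrix (Fin 2) (Fin 2) ℂ) * B * C).trace) =
      (((A : Matrix (Fin 2) (Fin 2) ℂ) * B * C).trace
          - (A : Matrix (Fin 2) (Fin 2) ℂ).trace * ((B : Matrix (Fin 2) (Fin 2) ℂ) * C).trace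
          - (C : Matrix (Fin 2) (Fin 2) ℂ).trace * ((A : Matrix (Fin 2) (Fin 2) ℂ) * B).trace
          + (A : Matrix (Fin 2) (Fin 2) ℂ).trace * (B : Matrix (Fin 2) (Fin 2) ℂ).trace *
            (C : Matrix (Fin 2) (Fin 2) ℂ).trace)
        * ((D : Matrix (Fin 2) (Fin 2) ℂ).trace - 2)
      + (((A : Matrix (Fin 2) (Fin 2) ℂ) * B).trace
          - (A : Matrix (Fin 2) (Fin 2) ℂ).trace * (B : Matrix (Fin 2) (Fin 2) ℂ).trace)
        * (((C : Matrix (Fin 2) (Fin 2) ℂ) * D).trace - (C : Matrix (Fin 2) (Fin 2) ℂ).trace)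
      - ((A : Matrix (Fin 2) (Fin 2) ℂ) * C).trace
        * (((B : Matrix (Fin 2) (Fin 2) ℂ) * D).trace - (B : Matrix (Fin 2) (Fin 2) ℂ).trace)
      + (((B : Matrix (Fin 2) (Fin 2) ℂ) * C).trace
          - (B : Matrix (Fin 2) (Fin 2) ℂ).trace * (C : Matrix (Fin 2) (Fin 2) ℂ).trace)
        * (((A : Matrix (Fin 2) (Fin 2) ℂ) * D).trace - (A : Matrix (Fin 2) (Fin 2) ℂ).trace)
      + (A : Matrix (Fin 2) (Fin 2) ℂ).trace
        * (((B : Matrix (Fin 2) (Fin 2) ℂ) * C * D).trace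
            - ((B : Matrix (Fin 2) (Fin 2) ℂ) * C).trace)
      + (B : Matrix (Fin 2) (Fin 2) ℂ).trace
        * (((A : Matrix (Fin 2) (Fin 2) ℂ) * C * D).trace
            - ((A : Matrix (Fin 2) (Fin 2) ℂ) * C).trace)
      + (C : Matrix (Fin 2) (Fin 2) ℂ).trace
        * (((A : Matrix (Fin 2) (Fin 2) ℂ) * B * D).trace
            - ((A : Matrix (Fin 2) (Fin 2) ℂ) * B).trace) := by
  simp only [Matrix.trace_fin_two, Matrix.mul_apply, Fin.sum_univ_two]
  ring
end

section
/- Let B be a Noetherian local ring with maximal ideal 𝔪, and let gr(B) = ⊕_{n≥0} 𝔪ⁿ/𝔪ⁿ⁺¹ be the associated graded ring, with multiplication of homogeneous elements induced by multiplication in B. Then: (1) if gr(B) is reduced, then B is reduced; (2) if gr(B) is a normal domain (an integral domain integrally closed in its field of fractions), then B is a normal domain. -/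
/-!
A nonzero `a : B` has, by Krull's intersection theorem, a largest `n` with `a ∈ 𝔪ⁿ`, hence a
nonzero initial form in degree `n` of `gr(B)`. As long as products of initial forms do not vanish,
they are the initial forms of the products; this yields reducedness and the domain property.

For normality, let `x = a / b` be integral over `B`. The ideal `bB` is closed in the `𝔪`-adic
topology, so it suffices to find, for every `n`, some `r` with `a - b r ∈ 𝔪ⁿ`. Suppose that
`c = a - b r` has order exactly `n`. Then `c / b = x - r` is again integral, hence almost
integral: there is `d ≠ 0` with `bᵏ ∣ d cᵏ` for all `k`. Taking initial forms,
`in(b)ᵏ ∣ in(d) in(c)ᵏ` for all `k`, so `in(c) / in(b)` is almost integral over `gr(B)`.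
Since `gr(B)` is Noetherian and integrally closed, `in(b) ∣ in(c)`
(`dvd_of_forall_pow_dvd_mul_pow`), and the degree `n` part of this divisibility provides `e` with
`c - b e ∈ 𝔪ⁿ⁺¹` (`exists_sub_mul_mem_of_form_dvd`), which improves the approximation.
-/


noncomputable section

/-- The associated graded ring `gr(B) = ⊕ₙ 𝔪ⁿ/𝔪ⁿ⁺¹` of a commutative ring `B` along an
ideal `𝔪`, with multiplication of homogeneous elements induced by multiplication in `B`,
presented as the quotient of the Rees algebra `⊕ₙ 𝔪ⁿ tⁿ ⊆ B[t]` by the ideal generated by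
`𝔪` (in degree zero): `gr(B) = Rees(𝔪) ⧸ 𝔪·Rees(𝔪) = ⊕ₙ 𝔪ⁿ/𝔪ⁿ⁺¹`. -/
def AssociatedGraded (B : Type) [CommRing B] (𝔪 : Ideal B) : Type :=
  reesAlgebra 𝔪 ⧸ (𝔪.map (algebraMap B (reesAlgebra 𝔪)))

instance (B : Type) [CommRing B] (𝔪 : Ideal B) : CommRing (AssociatedGraded B 𝔪) := by
  delta AssociatedGraded; infer_instance

namespace AssociatedGraded

open Polynomial nonZeroDivisors

variable {B : Type} [CommRing B] {𝔪 : Ideal B}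

/-- The class of `a ∈ 𝔪ⁿ` in the degree `n` component `𝔪ⁿ/𝔪ⁿ⁺¹` of `gr(B)`, represented by the
element `a tⁿ` of the Rees algebra. -/
def form (n : ℕ) (a : B) (h : a ∈ 𝔪 ^ n) : AssociatedGraded B 𝔪 :=
  Ideal.Quotient.mk (𝔪.map (algebraMap B (reesAlgebra 𝔪)))
    ⟨monomial n a, reesAlgebra.monomial_mem.2 h⟩

theorem coeff_mem_of_mem_map {f : reesAlgebra 𝔪}
    (hf : f ∈ 𝔪.map (algebraMap B (reesAlgebra 𝔪))) (n : ℕ) :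
    (f : B[X]).coeff n ∈ 𝔪 ^ (n + 1) := by
  induction hf using Submodule.span_induction generalizing n with
  | mem x hx =>
    obtain ⟨b, hb, rfl⟩ := hx
    change (C b : B[X]).coeff n ∈ _
    rw [coeff_C]
    split_ifs with h
    · subst h; simpa using hb
    · exact zero_mem _
  | zero => simp
  | add x y _ _ hx hy => simpa using add_mem (hx n) (hy n)
  | smul r x _ hx =>
    simp only [smul_eq_mul, MulMemClass.coe_mul, coeff_mul]
    refine Ideal.sum_mem _ fun ij hij => ?_
    rw [← Finset.HasAntidiagonal.mem_antidiagonal.mp hij, add_assoc, pow_add]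
    exact Ideal.mul_mem_mul (r.2 _) (hx _)

theorem monomial_mem_map {n : ℕ} {a : B} (h : a ∈ 𝔪 ^ n) (ha : a ∈ 𝔪 ^ (n + 1)) :
    (⟨monomial n a, reesAlgebra.monomial_mem.2 h⟩ : reesAlgebra 𝔪) ∈
      𝔪.map (algebraMap B (reesAlgebra 𝔪)) := by
  rw [pow_succ'] at ha
  induction ha using Submodule.mul_induction_on' with
  | mem_mul_mem u hu v hv =>
    have : (⟨monomial n (u * v), reesAlgebra.monomial_mem.2 h⟩ : reesAlgebra 𝔪) =
        algebraMap B (reesAlgebra 𝔪) u * ⟨monomial n v, reesAlgebra.monomial_mem.2 hv⟩ := by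
      ext1
      change monomial n (u * v) = C u * monomial n v
      rw [C_mul_monomial]
    rw [this]
    exact Ideal.mul_mem_right _ _ (Ideal.mem_map_of_mem _ hu)
  | add x hx y hy ihx ihy =>
    have hx' : x ∈ 𝔪 ^ n := Ideal.pow_le_pow_right n.le_succ (pow_succ' 𝔪 n ▸ hx)
    have hy' : y ∈ 𝔪 ^ n := Ideal.pow_le_pow_right n.le_succ (pow_succ' 𝔪 n ▸ hy)
    have : (⟨monomial n (x + y), reesAlgebra.monomial_mem.2 h⟩ : reesAlgebra 𝔪) =
        ⟨monomial n x, reesAlgebra.monomial_mem.2 hx'⟩ +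
          ⟨monomial n y, reesAlgebra.monomial_mem.2 hy'⟩ :=
      Subtype.ext (map_add (monomial n) x y)
    rw [this]
    exact Ideal.add_mem _ (ihx hx') (ihy hy')

theorem form_eq_zero_iff {n : ℕ} {a : B} (h : a ∈ 𝔪 ^ n) :
    form n a h = 0 ↔ a ∈ 𝔪 ^ (n + 1) := by
  refine (Ideal.Quotient.eq_zero_iff_mem).trans
    ⟨fun H => ?_, monomial_mem_map h⟩
  simpa using coeff_mem_of_mem_map H n

theorem form_mul {n k : ℕ} {a b : B} (ha : a ∈ 𝔪 ^ n) (hb : b ∈ 𝔪 ^ k)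
    (hab : a * b ∈ 𝔪 ^ (n + k)) :
    form n a ha * form k b hb = form (n + k) (a * b) hab := by
  refine (map_mul (Ideal.Quotient.mk _) _ _).symm.trans (congrArg _ ?_)
  ext1
  exact monomial_mul_monomial n k a b

/-- Comparing degree `n` components in a divisibility between homogeneous elements. When `n < k`
the divisor has no multiples with a nonzero degree `n` component, so any `e` works. -/
theorem exists_sub_mul_mem_of_form_dvd {n k : ℕ} {c b : B} (hc : c ∈ 𝔪 ^ n) (hb : b ∈ 𝔪 ^ k)
    (H : form k b hb ∣ form n c hc) : ∃ e, c - b * e ∈ 𝔪 ^ (n + 1) := by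
  obtain ⟨g, hg⟩ := H
  obtain ⟨f, rfl⟩ := Ideal.Quotient.mk_surjective g
  have h := (Ideal.Quotient.mk_eq_mk_iff_sub_mem _ _).1
    (hg.trans (map_mul (Ideal.Quotient.mk _) _ _).symm)
  have h' : c - (monomial k b * (f : B[X])).coeff n ∈ 𝔪 ^ (n + 1) := by
    simpa using coeff_mem_of_mem_map h n
  rw [← C_mul_X_pow_eq_monomial, mul_assoc, coeff_C_mul] at h'
  exact ⟨_, h'⟩

/-- `g` is the initial form of `a`: the nonzero class of `a` in `𝔪ⁿ/𝔪ⁿ⁺¹` for some `n`. Since `g`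
is required to be nonzero, such an `n` is the largest one with `a ∈ 𝔪ⁿ`. -/
def IsInitial (a : B) (g : AssociatedGraded B 𝔪) : Prop :=
  g ≠ 0 ∧ ∃ n h, g = form n a h

theorem IsInitial.ne_zero {a : B} {g : AssociatedGraded B 𝔪} (h : IsInitial a g) : a ≠ 0 := by
  rintro rfl
  obtain ⟨hg, n, hn, rfl⟩ := h
  exact hg ((form_eq_zero_iff hn).2 (zero_mem _))

theorem IsInitial.unique {a : B} {g g' : AssociatedGraded B 𝔪} (h : IsInitial a g)
    (h' : IsInitial a g') : g = g' := by
  obtain ⟨hg, n, hn, rfl⟩ := h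
  obtain ⟨hg', n', hn', rfl⟩ := h'
  rw [Ne, form_eq_zero_iff] at hg hg'
  have h1 : ¬ n < n' := fun hlt => hg (Ideal.pow_le_pow_right hlt hn')
  have h2 : ¬ n' < n := fun hlt => hg' (Ideal.pow_le_pow_right hlt hn)
  obtain rfl : n = n' := by omega
  rfl

theorem IsInitial.mul {a b : B} {g h : AssociatedGraded B 𝔪} (ha : IsInitial a g)
    (hb : IsInitial b h) (hgh : g * h ≠ 0) : IsInitial (a * b) (g * h) := by
  obtain ⟨-, n, hn, rfl⟩ := ha
  obtain ⟨-, k, hk, rfl⟩ := hb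
  exact ⟨hgh, n + k, pow_add 𝔪 n k ▸ Ideal.mul_mem_mul hn hk, form_mul _ _ _⟩

theorem IsInitial.mul_pow [IsDomain (AssociatedGraded B 𝔪)] {a b : B}
    {g h : AssociatedGraded B 𝔪} (ha : IsInitial a g) (hb : IsInitial b h) (k : ℕ) :
    IsInitial (a * b ^ k) (g * h ^ k) := by
  induction k with
  | zero => simpa using ha
  | succ k ih =>
    rw [pow_succ, pow_succ, ← mul_assoc, ← mul_assoc]
    exact ih.mul hb (mul_ne_zero ih.1 hb.1)

theorem exists_isInitial [IsLocalRing B] [IsNoetherianRing B] (h𝔪 : 𝔪 ≠ ⊤) {a : B}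
    (ha : a ≠ 0) : ∃ g : AssociatedGraded B 𝔪, IsInitial a g := by
  classical
  have hex : ∃ n, a ∉ 𝔪 ^ n := by
    by_contra! H
    exact ha (by simpa [Ideal.iInf_pow_eq_bot_of_isLocalRing 𝔪 h𝔪] using
      (Ideal.mem_iInf (I := fun n : ℕ => 𝔪 ^ n)).2 H)
  obtain ⟨n, hn⟩ : ∃ n, Nat.find hex = n + 1 :=
    Nat.exists_eq_succ_of_ne_zero fun h0 => by simpa [h0] using Nat.find_spec hex
  have h1 : a ∈ 𝔪 ^ n := not_not.1 (Nat.find_min hex (by omega))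
  exact ⟨form n a h1, fun H => Nat.find_spec hex (hn ▸ (form_eq_zero_iff h1).1 H), n, h1, rfl⟩

instance [IsNoetherianRing B] : IsNoetherianRing (AssociatedGraded B 𝔪) := by
  delta AssociatedGraded; infer_instance

theorem isReduced_of_isReduced [IsLocalRing B] [IsNoetherianRing B] (h𝔪 : 𝔪 ≠ ⊤)
    [IsReduced (AssociatedGraded B 𝔪)] : IsReduced B := by
  rw [isReduced_iff_pow_one_lt 2 one_lt_two]
  intro a ha
  by_contra h0
  obtain ⟨g, hg⟩ := exists_isInitial h𝔪 h0
  have hgg : g * g ≠ 0 := fun H => hg.1 (IsReduced.eq_zero g ⟨2, by rw [sq, H]⟩)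
  exact (hg.mul hg hgg).ne_zero (by rw [← sq, ha])

theorem isDomain_of_isDomain [IsLocalRing B] [IsNoetherianRing B] (h𝔪 : 𝔪 ≠ ⊤)
    [IsDomain (AssociatedGraded B 𝔪)] : IsDomain B := by
  have : NoZeroDivisors B := ⟨fun {a b} hab => by
    by_contra! H
    obtain ⟨g, hg⟩ := exists_isInitial h𝔪 H.1
    obtain ⟨h, hh⟩ := exists_isInitial h𝔪 H.2
    exact (hg.mul hh (mul_ne_zero hg.1 hh.1)).ne_zero hab⟩
  exact NoZeroDivisors.to_isDomain B

/-- If `c / b` is almost integral over a Noetherian integrally closed domain, then `b ∣ c`. -/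
theorem dvd_of_forall_pow_dvd_mul_pow {R : Type*} [CommRing R] [IsDomain R] [IsNoetherianRing R]
    [IsIntegrallyClosed R] {b c d : R} (hb : b ≠ 0) (hd : d ≠ 0)
    (H : ∀ k, b ^ k ∣ d * c ^ k) : b ∣ c := by
  let K := FractionRing R
  have hb' : algebraMap R K b ≠ 0 := by simpa using hb
  have hint : IsAlmostIntegral R (algebraMap R K c / algebraMap R K b) := by
    refine ⟨d, mem_nonZeroDivisors_of_ne_zero hd, fun k => ?_⟩
    obtain ⟨e, he⟩ := H k
    refine ⟨e, ?_⟩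
    rw [Algebra.smul_def, div_pow, mul_div_assoc', eq_div_iff (pow_ne_zero _ hb'), ← map_pow,
      ← map_pow, ← map_mul, ← map_mul, he, mul_comm]
  obtain ⟨y, hy⟩ := IsIntegrallyClosed.isIntegral_iff.1 hint.isIntegral
  refine ⟨y, IsFractionRing.injective R K ?_⟩
  rw [map_mul, hy, mul_div_cancel₀ _ hb']

/-- Clearing denominators in the almost integrality of an integral fraction `c / b`. -/
theorem exists_forall_pow_dvd_mul_pow {R K : Type*} [CommRing R] [IsDomain R] [Field K]
    [Algebra R K] [IsFractionRing R K] {x : K} (hx : IsIntegral R x) {b c : R}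
    (hc : algebraMap R K b * x = algebraMap R K c) :
    ∃ d : R, d ≠ 0 ∧ ∀ k, b ^ k ∣ d * c ^ k := by
  obtain ⟨d, hd, h⟩ := hx.isAlmostIntegral
  refine ⟨d, nonZeroDivisors.ne_zero hd, fun k => ?_⟩
  obtain ⟨e, he⟩ := h k
  refine ⟨e, IsFractionRing.injective R K ?_⟩
  rw [Algebra.smul_def] at he
  rw [map_mul, map_mul, map_pow, map_pow, he, ← hc, _root_.mul_pow]
  ring

/-- Principal ideals of a Noetherian local ring are closed in the `𝔪`-adic topology, by Krull's
intersection theorem for the module `B ⧸ bB`. -/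
theorem dvd_of_forall_exists_sub_mul_mem [IsLocalRing B] [IsNoetherianRing B] (h𝔪 : 𝔪 ≠ ⊤)
    {a b : B} (H : ∀ n, ∃ r, a - b * r ∈ 𝔪 ^ n) : b ∣ a := by
  have hH := IsHausdorff.of_isLocalRing (I := 𝔪) (M := B ⧸ Ideal.span {b}) h𝔪
  rw [← Ideal.mem_span_singleton, ← Ideal.Quotient.eq_zero_iff_mem]
  refine hH.haus _ fun n => ?_
  obtain ⟨r, hr⟩ := H n
  rw [SModEq.zero]
  have h1 : (Ideal.Quotient.mk (Ideal.span {b})) a = (a - b * r) • 1 := by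
    rw [Algebra.smul_def, mul_one, Ideal.Quotient.algebraMap_eq,
      Ideal.Quotient.mk_eq_mk_iff_sub_mem, Ideal.mem_span_singleton]
    exact ⟨r, by ring⟩
  rw [h1]
  exact Submodule.smul_mem_smul hr trivial

theorem isIntegrallyClosed_of_isIntegrallyClosed [IsLocalRing B] [IsNoetherianRing B]
    (h𝔪 : 𝔪 ≠ ⊤) [IsDomain B] [IsDomain (AssociatedGraded B 𝔪)]
    [IsIntegrallyClosed (AssociatedGraded B 𝔪)] : IsIntegrallyClosed B := by
  let K := FractionRing B
  rw [isIntegrallyClosed_iff K]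
  intro x hx
  obtain ⟨a, b, hb, rfl⟩ := IsFractionRing.div_surjective (A := B) x
  have hb0 : b ≠ 0 := nonZeroDivisors.ne_zero hb
  have hb' : algebraMap B K b ≠ 0 := by simpa using hb0
  suffices b ∣ a by
    obtain ⟨y, rfl⟩ := this
    exact ⟨y, by rw [map_mul, mul_div_cancel_left₀ _ hb']⟩
  refine dvd_of_forall_exists_sub_mul_mem h𝔪 fun n => ?_
  induction n with
  | zero => exact ⟨0, by simp⟩
  | succ n ih =>
    obtain ⟨r, hr⟩ := ih
    set c := a - b * r with hc
    by_cases hcn : c ∈ 𝔪 ^ (n + 1)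
    · exact ⟨r, hcn⟩
    have hγ : IsInitial c (form n c hr) := ⟨by rwa [Ne, form_eq_zero_iff], n, hr, rfl⟩
    -- The element `c / b = a / b - r` is integral over `B`.
    obtain ⟨d, hd0, hd⟩ := exists_forall_pow_dvd_mul_pow (b := b) (c := c)
      (hx.sub (isIntegral_algebraMap (x := r))) (by
        rw [mul_sub, mul_div_cancel₀ _ hb', hc, map_sub, map_mul])
    obtain ⟨β, hβ⟩ := exists_isInitial h𝔪 hb0
    obtain ⟨δ, hδ⟩ := exists_isInitial h𝔪 hd0
    have hdvd : β ∣ form n c hr := by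
      refine dvd_of_forall_pow_dvd_mul_pow hβ.1 hδ.1 fun k => ?_
      obtain ⟨e, he⟩ := hd k
      have h1 := hδ.mul_pow hγ k
      obtain ⟨ε, hε⟩ := exists_isInitial h𝔪 (a := e) (by
        rintro rfl
        exact h1.ne_zero (by rw [he, mul_zero]))
      -- Both sides of `d * c ^ k = b ^ k * e` have the same initial form.
      have h2 := hε.mul_pow hβ k
      rw [mul_comm e, ← he] at h2
      exact ⟨ε, by rw [h1.unique h2, mul_comm]⟩
    obtain ⟨-, k, hk, rfl⟩ := hβ
    obtain ⟨e, he⟩ := exists_sub_mul_mem_of_form_dvd hr hk hdvd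
    exact ⟨r + e, by rwa [hc, sub_sub, ← mul_add] at he⟩

end AssociatedGraded

/-- **Properties inherited from the associated graded ring.**
Let `B` be a Noetherian local ring with maximal ideal `𝔪` and associated graded ring
`gr(B) = ⊕ₙ 𝔪ⁿ/𝔪ⁿ⁺¹`.  (1) If `gr(B)` is reduced, then `B` is reduced.  (2) If `gr(B)`
is a normal domain (an integral domain which is integrally closed in its field of
fractions), then so is `B`. -/
theorem reduced_normal_of_associatedGraded (B : Type) [CommRing B] [IsLocalRing B]
    [IsNoetherianRing B] :
    (IsReduced (AssociatedGraded B (IsLocalRing.maximalIdeal B)) → IsReduced B) ∧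
    ((IsDomain (AssociatedGraded B (IsLocalRing.maximalIdeal B)) ∧
        IsIntegrallyClosed (AssociatedGraded B (IsLocalRing.maximalIdeal B))) →
      (IsDomain B ∧ IsIntegrallyClosed B)) := by
  have h𝔪 : IsLocalRing.maximalIdeal B ≠ ⊤ := Ideal.IsPrime.ne_top'
  refine ⟨fun _ => AssociatedGraded.isReduced_of_isReduced h𝔪, fun ⟨_, _⟩ => ?_⟩
  have := AssociatedGraded.isDomain_of_isDomain h𝔪
  exact ⟨this, AssociatedGraded.isIntegrallyClosed_of_isIntegrallyClosed h𝔪⟩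

end
end

section
/- Let Γ be a finitely generated abelian group with first Betti number β (the rank of Γ) and let ρ : Γ → SL₂(ℂ) be a group homomorphism whose image is not contained in the center {±id}. Then the ℂ-vector space Z¹(Γ, Ad ρ) of 1-cocycles has dimension at most β + 2. -/
/-!
Fix `γ₀` with `A = ρ γ₀ ≠ ±1`, and let `A₀ = A - (tr A / 2)` be its trace-free part; `A₀ ≠ 0`.
Everything in the image of `ρ` commutes with `A`, hence with `A₀`, and the centralizer of `A₀` in
`sl₂(ℂ)` is the line `ℂ A₀`.

If a cocycle `d` vanishes at `γ₀`, then comparing `d (γ₀ γ)` with `d (γ γ₀)` shows that `d γ`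
commutes with `A`, so `d` takes values in `ℂ A₀`, on which `Γ` acts trivially. So a fixed matrix
entry of `d`, at a position where `A₀` is nonzero, is an additive character `Γ → ℂ` that determines
`d`. Additive characters kill torsion, so they are determined by their values on the `β` generators
`g i` of the free part (`character_eq_sum`). Consequently `d ↦ (d γ₀, (entry of d (g i))ᵢ)` embeds
`Z¹` into `sl₂(ℂ) × ℂ^β`, of dimension `β + 3`. One dimension is saved as follows.

* If `γ₀` has infinite order, let `f` be the entry character of a cocycle vanishing at `γ₀`. Some
  generator `g j` occurs in `γ₀` with nonzero exponent. The relation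
  `0 = f γ₀ = ∑ nᵢ f (g i)` recovers `f (g j)` from the other values, so the coordinate `j` can be
  dropped.
* If `γ₀` is torsion, then `γ ↦ tr (A₀ (d γ))` is an additive character for every cocycle `d`,
  so `tr (A₀ (d γ₀)) = 0`, and the embedding lands in a proper subspace.
-/

noncomputable section

/-- The space `Z¹(Γ, Ad ρ)` of 1-cocycles: trace-free-matrix-valued maps `d : Γ → sl₂(ℂ)`
with `d(γ₁γ₂) = d(γ₁) + Ad_{ρ(γ₁)} d(γ₂)`, as a `ℂ`-submodule of `Γ → M₂(ℂ)`. -/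
def adCocycles (Γ : Type) [Group Γ] (ρ : Γ →* Matrix.SpecialLinearGroup (Fin 2) ℂ) :
    Submodule ℂ (Γ → Matrix (Fin 2) (Fin 2) ℂ) where
  carrier := {d | (∀ γ, (d γ).trace = 0) ∧
    ∀ γ₁ γ₂ : Γ, d (γ₁ * γ₂) =
      d γ₁ + (ρ γ₁ : Matrix (Fin 2) (Fin 2) ℂ) * d γ₂ *
        ((ρ γ₁)⁻¹ : Matrix (Fin 2) (Fin 2) ℂ)}
  zero_mem' := by
    refine ⟨fun γ => by simp, fun γ₁ γ₂ => by simp⟩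
  add_mem' := by
    rintro d d' ⟨hd0, hd⟩ ⟨hd'0, hd'⟩
    refine ⟨fun γ => by simp [hd0 γ, hd'0 γ], fun γ₁ γ₂ => ?_⟩
    simp only [Pi.add_apply, hd γ₁ γ₂, hd' γ₁ γ₂, Matrix.mul_add, Matrix.add_mul]
    abel
  smul_mem' := by
    rintro c d ⟨hd0, hd⟩
    refine ⟨fun γ => by simp [hd0 γ], fun γ₁ γ₂ => ?_⟩
    simp only [Pi.smul_apply, hd γ₁ γ₂, smul_add, Matrix.mul_smul, Matrix.smul_mul]

/-- An additive character of `ℤ^β × T`, with `T` finite, is determined by its values on the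
standard generators of the free part. -/
lemma character_eq_sum {Γ : Type} [CommGroup Γ] {β : ℕ} {T : Type} [CommGroup T] [Finite T]
    (eΓ : Γ ≃* (Multiplicative (Fin β → ℤ)) × T) (f : Γ → ℂ)
    (hf : ∀ x y, f (x * y) = f x + f y) (γ : Γ) :
    f γ = ∑ i, ((eΓ γ).1.toAdd i : ℂ) *
      f (eΓ.symm (Multiplicative.ofAdd (Pi.single i 1), 1)) := by
  have h1 : f 1 = 0 := by simpa using hf 1 1
  have hpow : ∀ (x : Γ) (n : ℕ), f (x ^ n) = n * f x := by
    intro x n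
    induction n with
    | zero => simp [h1]
    | succ k ih => rw [pow_succ, hf, ih]; push_cast; ring
  have hT : ∀ t : T, f (eΓ.symm (1, t)) = 0 := by
    intro t
    have h := hpow (eΓ.symm (1, t)) (Nat.card T)
    rw [← map_pow, Prod.pow_mk, pow_card_eq_one', one_pow,
      show ((1, 1) : Multiplicative (Fin β → ℤ) × T) = 1 from rfl, map_one, h1] at h
    have hc : (Nat.card T : ℂ) ≠ 0 := by exact_mod_cast Nat.card_pos.ne'
    exact (mul_eq_zero.mp h.symm).resolve_left hc
  let F : (Fin β → ℤ) →+ ℂ :=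
    { toFun := fun n => f (eΓ.symm (Multiplicative.ofAdd n, 1))
      map_zero' := by
        rw [ofAdd_zero, show ((1, 1) : Multiplicative (Fin β → ℤ) × T) = 1 from rfl, map_one, h1]
      map_add' := fun m n => by
        rw [← hf, ← map_mul, Prod.mk_mul_mk, ofAdd_add, one_mul] }
  have hF := LinearMap.pi_apply_eq_sum_univ F.toIntLinearMap ((eΓ γ).1.toAdd)
  have hsplit : f γ = F ((eΓ γ).1.toAdd) := by
    have : γ = eΓ.symm ((eΓ γ).1, 1) * eΓ.symm (1, (eΓ γ).2) := by
      rw [← map_mul, Prod.mk_mul_mk, one_mul, mul_one, Prod.mk.eta, MulEquiv.symm_apply_apply]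
    conv_lhs => rw [this]
    rw [hf, hT, add_zero]
    rfl
  rw [hsplit]
  refine Eq.trans hF (Finset.sum_congr rfl fun i _ => ?_)
  rw [zsmul_eq_mul]
  have hsingle : (fun k => if i = k then (1 : ℤ) else 0) = Pi.single i 1 := by
    funext k
    simp [Pi.single_apply, eq_comm]
  rw [hsingle]
  rfl

/-- Commuting trace-free `2 × 2` matrices are proportional. -/
lemma commuting_proportional (X Y : Matrix (Fin 2) (Fin 2) ℂ) (hX : X.trace = 0)
    (hY : Y.trace = 0) (h : X * Y = Y * X) (p q : Fin 2) : X p q • Y = Y p q • X := by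
  rw [Matrix.trace_fin_two] at hX hY
  have h00 := congrFun (congrFun h 0) 0
  have h01 := congrFun (congrFun h 0) 1
  have h10 := congrFun (congrFun h 1) 0
  simp only [Matrix.mul_apply, Fin.sum_univ_two] at h00 h01 h10
  have hX' : X 1 1 = - X 0 0 := by linear_combination hX
  have hY' : Y 1 1 = - Y 0 0 := by linear_combination hY
  rw [hX', hY'] at h01 h10
  have e1 : X 0 0 * Y 0 1 = Y 0 0 * X 0 1 := by linear_combination h01 / 2
  have e2 : X 0 0 * Y 1 0 = Y 0 0 * X 1 0 := by linear_combination - h10 / 2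
  have e3 : X 0 1 * Y 1 0 = Y 0 1 * X 1 0 := by linear_combination h00
  ext r s
  fin_cases p <;> fin_cases q <;> fin_cases r <;> fin_cases s <;>
    simp [hX', hY'] <;>
    first
    | ring1
    | linear_combination e1
    | linear_combination -e1
    | linear_combination e2
    | linear_combination -e2
    | linear_combination e3
    | linear_combination -e3

lemma exists_tracefree_part (A : Matrix (Fin 2) (Fin 2) ℂ) (hdet : A.det = 1)
    (hA : ¬ (A = 1 ∨ A = -1)) :
    (A - (A.trace / 2) • (1 : Matrix (Fin 2) (Fin 2) ℂ)).trace = 0 ∧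
      A - (A.trace / 2) • (1 : Matrix (Fin 2) (Fin 2) ℂ) ≠ 0 := by
  refine ⟨by simp [Matrix.trace_sub, Matrix.trace_smul], fun h => hA ?_⟩
  have h := sub_eq_zero.mp h
  generalize A.trace / 2 = s at h
  subst h
  have hs : s ^ 2 = 1 := by simpa [Matrix.det_smul] using hdet
  rcases sq_eq_sq_iff_eq_or_eq_neg.mp (hs.trans (one_pow 2).symm) with h | h <;> simp [h]

/-- For a cocycle `d` and an `A₀` commuting with the image of `ρ`, the pairing
`γ ↦ tr (A₀ (d γ))` is an additive character. -/
lemma trace_pairing_add {Γ : Type} [CommGroup Γ]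
    {ρ : Γ →* Matrix.SpecialLinearGroup (Fin 2) ℂ} {A₀ : Matrix (Fin 2) (Fin 2) ℂ}
    (hcomm : ∀ γ, (ρ γ : Matrix (Fin 2) (Fin 2) ℂ) * A₀ = A₀ * (ρ γ : Matrix (Fin 2) (Fin 2) ℂ))
    {d : Γ → Matrix (Fin 2) (Fin 2) ℂ} (hd : d ∈ adCocycles Γ ρ) (x y : Γ) :
    (A₀ * d (x * y)).trace = (A₀ * d x).trace + (A₀ * d y).trace := by
  have hu : IsUnit (ρ x : Matrix (Fin 2) (Fin 2) ℂ).det := by simp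
  rw [hd.2 x y, Matrix.mul_add, Matrix.trace_add]
  congr 1
  rw [← Matrix.mul_assoc, ← Matrix.mul_assoc, ← hcomm x, Matrix.trace_mul_comm,
    ← Matrix.mul_assoc, ← Matrix.mul_assoc, Matrix.nonsing_inv_mul _ hu, Matrix.one_mul]

/-- A cocycle vanishing at `γ₀` takes values in the line spanned by the trace-free part `A₀` of
`ρ γ₀`, on which `Γ` acts trivially; hence it is additive. -/
lemma vanishing_cocycle {Γ : Type} [CommGroup Γ]
    {ρ : Γ →* Matrix.SpecialLinearGroup (Fin 2) ℂ} {γ₀ : Γ} {A₀ : Matrix (Fin 2) (Fin 2) ℂ}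
    {s : ℂ} (hA₀ : A₀ = (ρ γ₀ : Matrix (Fin 2) (Fin 2) ℂ) - s • 1) (htr : A₀.trace = 0)
    (hcomm : ∀ γ, (ρ γ : Matrix (Fin 2) (Fin 2) ℂ) * A₀ = A₀ * (ρ γ : Matrix (Fin 2) (Fin 2) ℂ))
    {p q : Fin 2} (hpq : A₀ p q ≠ 0)
    {d : Γ → Matrix (Fin 2) (Fin 2) ℂ} (hd : d ∈ adCocycles Γ ρ) (h0 : d γ₀ = 0) :
    (∀ γ, d γ = (d γ p q / A₀ p q) • A₀) ∧ ∀ x y, d (x * y) = d x + d y := by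
  have hval : ∀ γ, d γ = (d γ p q / A₀ p q) • A₀ := by
    intro γ
    have hu : IsUnit (ρ γ₀ : Matrix (Fin 2) (Fin 2) ℂ).det := by simp
    have h := hd.2 γ₀ γ
    rw [mul_comm, hd.2 γ γ₀, h0, Matrix.mul_zero, Matrix.zero_mul, add_zero, zero_add] at h
    have hc : d γ * (ρ γ₀ : Matrix (Fin 2) (Fin 2) ℂ) = ρ γ₀ * d γ := by
      conv_lhs => rw [h]
      rw [Matrix.mul_assoc, Matrix.nonsing_inv_mul _ hu, Matrix.mul_one]
    have hc' : d γ * A₀ = A₀ * d γ := by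
      rw [hA₀, Matrix.mul_sub, Matrix.sub_mul, hc]; simp
    have := commuting_proportional (d γ) A₀ (hd.1 γ) htr hc' p q
    rw [div_eq_inv_mul, mul_smul, this, smul_smul, inv_mul_cancel₀ hpq, one_smul]
  refine ⟨hval, fun x y => ?_⟩
  have hu : IsUnit (ρ x : Matrix (Fin 2) (Fin 2) ℂ).det := by simp
  rw [hd.2 x y]
  congr 1
  rw [hval y, Matrix.mul_smul, Matrix.smul_mul, hcomm x, Matrix.mul_assoc,
    Matrix.mul_nonsing_inv _ hu, Matrix.mul_one]

/-- The linear map `d ↦ (d γ₀, (d (g i))_{p q})` on cocycles, for a family `g`; the trace-free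
matrix `d γ₀` is recorded by its entries `(0,0)`, `(0,1)`, `(1,0)`. -/
def evalMap {Γ : Type} [CommGroup Γ] (ρ : Γ →* Matrix.SpecialLinearGroup (Fin 2) ℂ) (γ₀ : Γ)
    (p q : Fin 2) {ι : Type} (g : ι → Γ) :
    adCocycles Γ ρ →ₗ[ℂ] (Fin 3 → ℂ) × (ι → ℂ) where
  toFun d := (![d.1 γ₀ 0 0, d.1 γ₀ 0 1, d.1 γ₀ 1 0], fun i => d.1 (g i) p q)
  map_add' d d' := by
    ext i
    · fin_cases i <;> simp
    · simp
  map_smul' c d := by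
    ext i
    · fin_cases i <;> simp
    · simp

lemma evalMap_eq_zero {Γ : Type} [CommGroup Γ] {ρ : Γ →* Matrix.SpecialLinearGroup (Fin 2) ℂ}
    {γ₀ : Γ} {p q : Fin 2} {ι : Type} {g : ι → Γ} {d : adCocycles Γ ρ}
    (h : evalMap ρ γ₀ p q g d = 0) : d.1 γ₀ = 0 ∧ ∀ i, d.1 (g i) p q = 0 := by
  have h1 := congrArg Prod.fst h
  have h2 := congrArg Prod.snd h
  refine ⟨?_, fun i => congrFun h2 i⟩
  have h00 : d.1 γ₀ 0 0 = 0 := congrFun h1 0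
  have h01 : d.1 γ₀ 0 1 = 0 := congrFun h1 1
  have h10 : d.1 γ₀ 1 0 = 0 := congrFun h1 2
  have htr := d.2.1 γ₀
  rw [Matrix.trace_fin_two, h00, zero_add] at htr
  ext r s
  fin_cases r <;> fin_cases s <;> simp [h00, h01, h10, htr]

/-- **Bound on the space of cocycles for an abelian group.**
Let `Γ` be a finitely generated abelian group with first Betti number `β`
(`Γ ≅ ℤ^β × T`, `T` finite) and let `ρ : Γ → SL₂(ℂ)` be a representation whose image is
not contained in the center `{± id}`.  Then `dim_ℂ Z¹(Γ, Ad ρ) ≤ β + 2`. -/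
theorem dim_cocycles_le_of_abelian (Γ : Type) [CommGroup Γ]
    (β : ℕ) (T : Type) [CommGroup T] [Finite T]
    (eΓ : Γ ≃* (Multiplicative (Fin β → ℤ)) × T)
    (ρ : Γ →* Matrix.SpecialLinearGroup (Fin 2) ℂ)
    (hρ : ¬ ∀ γ : Γ, (ρ γ : Matrix (Fin 2) (Fin 2) ℂ) = 1 ∨
      (ρ γ : Matrix (Fin 2) (Fin 2) ℂ) = -1) :
    Module.rank ℂ (adCocycles Γ ρ) ≤ (β : Cardinal) + 2 := by
  obtain ⟨γ₀, hγ₀⟩ := not_forall.mp hρ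
  obtain ⟨htr, hne⟩ := exists_tracefree_part _ (ρ γ₀).2 hγ₀
  obtain ⟨A₀, hA₀⟩ : ∃ A₀, A₀ = (ρ γ₀ : Matrix (Fin 2) (Fin 2) ℂ) -
    ((ρ γ₀ : Matrix (Fin 2) (Fin 2) ℂ).trace / 2) • 1 := ⟨_, rfl⟩
  rw [← hA₀] at htr hne
  have hcomm : ∀ γ, (ρ γ : Matrix (Fin 2) (Fin 2) ℂ) * A₀ =
      A₀ * (ρ γ : Matrix (Fin 2) (Fin 2) ℂ) := by
    intro γ
    have h : (ρ γ : Matrix (Fin 2) (Fin 2) ℂ) * ρ γ₀ = ρ γ₀ * ρ γ := by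
      rw [← Matrix.SpecialLinearGroup.coe_mul, ← Matrix.SpecialLinearGroup.coe_mul, ← map_mul,
        ← map_mul, mul_comm]
    rw [hA₀, Matrix.mul_sub, Matrix.sub_mul, h]
    simp
  obtain ⟨p, q, hpq⟩ : ∃ p q, A₀ p q ≠ 0 := by
    by_contra! h
    exact hne (Matrix.ext h)
  let g : Fin β → Γ := fun i => eΓ.symm (Multiplicative.ofAdd (Pi.single i 1), 1)
  have hzero : ∀ d ∈ adCocycles Γ ρ, d γ₀ = 0 → (∀ i, d (g i) p q = 0) → d = 0 := by
    intro d hd h0 hg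
    obtain ⟨hval, hadd⟩ := vanishing_cocycle hA₀ htr hcomm hpq hd h0
    funext γ
    have := character_eq_sum eΓ (fun γ => d γ p q) (fun x y => by simp [hadd]) γ
    rw [hval γ, this, Finset.sum_eq_zero fun i _ => by rw [show d _ p q = 0 from hg i, mul_zero]]
    simp
  by_cases htors : ∀ j, (eΓ γ₀).1.toAdd j = 0
  · have hinj : Function.Injective (evalMap ρ γ₀ p q g) := by
      rw [injective_iff_map_eq_zero]
      intro d hd
      obtain ⟨h0, hg⟩ := evalMap_eq_zero hd
      exact Subtype.ext (hzero d.1 d.2 h0 hg)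
    -- The functional `X ↦ tr (A₀ X)` on `sl₂(ℂ)`, in the coordinates used by `evalMap`.
    let L : ((Fin 3 → ℂ) × (Fin β → ℂ)) →ₗ[ℂ] ℂ :=
      ((2 * A₀ 0 0) • LinearMap.proj 0 + A₀ 1 0 • LinearMap.proj 1
        + A₀ 0 1 • LinearMap.proj 2) ∘ₗ LinearMap.fst ℂ (Fin 3 → ℂ) (Fin β → ℂ)
    have hL : ∀ v, L v = 2 * A₀ 0 0 * v.1 0 + A₀ 1 0 * v.1 1 + A₀ 0 1 * v.1 2 := by
      intro v; simp [L]
    have h11 : A₀ 1 1 = - A₀ 0 0 := by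
      rw [Matrix.trace_fin_two] at htr; linear_combination htr
    have hrange : LinearMap.range (evalMap ρ γ₀ p q g) ≤ LinearMap.ker L := by
      rintro _ ⟨d, rfl⟩
      have h := character_eq_sum eΓ (fun γ => (A₀ * d.1 γ).trace)
        (trace_pairing_add hcomm d.2) γ₀
      simp only [htors, Int.cast_zero, zero_mul, Finset.sum_const_zero] at h
      have hd := d.2.1 γ₀
      simp only [Matrix.trace_fin_two, Matrix.mul_apply, Fin.sum_univ_two] at h hd
      rw [h11] at h
      rw [LinearMap.mem_ker, hL]
      change 2 * A₀ 0 0 * d.1 γ₀ 0 0 + A₀ 1 0 * d.1 γ₀ 0 1 + A₀ 0 1 * d.1 γ₀ 1 0 = 0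
      linear_combination h + A₀ 0 0 * hd
    have hker : LinearMap.ker L < ⊤ := by
      rw [lt_top_iff_ne_top]
      intro htop
      have hz : ∀ v, L v = 0 := fun v => by
        rw [← LinearMap.mem_ker, htop]; trivial
      have e0 := hz (![1, 0, 0], 0)
      have e1 := hz (![0, 1, 0], 0)
      have e2 := hz (![0, 0, 1], 0)
      simp [hL] at e0 e1 e2
      apply hne
      ext r s
      fin_cases r <;> fin_cases s <;> simp [e0, e1, e2, h11]
    have hlt := Submodule.finrank_lt (lt_of_le_of_lt hrange hker).ne
    have : FiniteDimensional ℂ (adCocycles Γ ρ) := FiniteDimensional.of_injective _ hinj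
    rw [LinearMap.finrank_range_of_inj hinj] at hlt
    simp only [Module.finrank_prod, Module.finrank_fintype_fun_eq_card, Fintype.card_fin] at hlt
    rw [← Module.finrank_eq_rank]
    exact_mod_cast (by omega : Module.finrank ℂ (adCocycles Γ ρ) ≤ β + 2)
  · obtain ⟨j, hj⟩ := not_forall.mp htors
    have hinj : Function.Injective
        (evalMap ρ γ₀ p q (fun i : {i : Fin β // i ≠ j} => g i)) := by
      rw [injective_iff_map_eq_zero]
      intro d hd
      obtain ⟨h0, hg⟩ := evalMap_eq_zero hd
      refine Subtype.ext (hzero d.1 d.2 h0 fun i => ?_)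
      by_cases hij : i = j
      · subst hij
        have hadd := (vanishing_cocycle hA₀ htr hcomm hpq d.2 h0).2
        have h := character_eq_sum eΓ (fun γ => d.1 γ p q) (fun x y => by simp [hadd]) γ₀
        rw [Finset.sum_eq_single i
          (fun k _ hk => by rw [show d.1 _ p q = 0 from hg ⟨k, hk⟩, mul_zero])
          (fun hi => absurd (Finset.mem_univ i) hi), h0] at h
        exact (mul_eq_zero.mp h.symm).resolve_left (by exact_mod_cast hj)
      · exact hg ⟨i, hij⟩
    have : FiniteDimensional ℂ (adCocycles Γ ρ) := FiniteDimensional.of_injective _ hinj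
    have hle := LinearMap.finrank_le_finrank_of_injective hinj
    have hcard : Fintype.card {i : Fin β // i ≠ j} = β - 1 := by simp
    have hpos : 0 < β := j.pos
    simp only [Module.finrank_prod, Module.finrank_fintype_fun_eq_card, Fintype.card_fin,
      hcard] at hle
    rw [← Module.finrank_eq_rank]
    exact_mod_cast (by omega : Module.finrank ℂ (adCocycles Γ ρ) ≤ β + 2)

end
end

section
/- For every finitely generated abelian group Γ, the skein algebra S_Γ is reduced (it has no nonzero nilpotent elements). -/
/-!
For abelian `Γ`, the assignment `[γ] ↦ γ + γ⁻¹` respects the skein relations and so defines an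
algebra homomorphism `φ : S_Γ → ℂ[Γ]`. The relations also give `[γ] = [γ⁻¹]`, and they show that
the classes `[γ]` span `S_Γ` linearly. Hence the linear map `ℂ[Γ] → S_Γ`, `γ ↦ [γ] / 2`, is a left
inverse of `φ`, and `S_Γ` is a subalgebra of `ℂ[Γ]`.

The commutative ring `ℂ[Γ]` is reduced: for the involution `f ↦ f̃ = ∑ conj (f γ) γ⁻¹`, the
coefficient of `f f̃` at `1` is `∑ |f γ|²`, so `f f̃ = 0` forces `f = 0`. If `f² = 0` then `h = f f̃`
satisfies `h̃ = h` and `h h̃ = h² = 0`; thus `h = 0` and `f = 0`.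
-/

noncomputable section

/-- The conjugate-linear involution `∑ c_g g ↦ ∑ conj(c_g) g⁻¹` of the complex group algebra of
an abelian group. -/
def groupAlgConj (G : Type) [CommGroup G] : MonoidAlgebra ℂ G →+* MonoidAlgebra ℂ G :=
  (MonoidAlgebra.mapDomainRingHom ℂ (invMonoidHom : G →* G)).comp
    (MonoidAlgebra.mapRingHom G (starRingEnd ℂ))

lemma groupAlgConj_single {G : Type} [CommGroup G] (g : G) (c : ℂ) :
    groupAlgConj G (MonoidAlgebra.single g c) =
      MonoidAlgebra.single g⁻¹ (starRingEnd ℂ c) := by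
  simp [groupAlgConj]

lemma groupAlgConj_conj {G : Type} [CommGroup G] (f : MonoidAlgebra ℂ G) :
    groupAlgConj G (groupAlgConj G f) = f := by
  induction f using MonoidAlgebra.induction_linear with
  | zero => simp
  | add f g hf hg => simp [hf, hg]
  | single g c => simp [groupAlgConj_single]

lemma groupAlgConj_apply {G : Type} [CommGroup G] (f : MonoidAlgebra ℂ G) (g : G) :
    (groupAlgConj G f).coeff g = starRingEnd ℂ (f.coeff g⁻¹) := by
  classical
  induction f using MonoidAlgebra.induction_linear with
  | zero => simp
  | add f h hf hh => simp [hf, hh]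
  | single a c =>
    simp [groupAlgConj_single, Finsupp.single_apply, inv_eq_iff_eq_inv]
    split_ifs <;> simp

/-- The involution is positive definite: the coefficient of `f * f̃` at `1` is `∑ |f g|²`. -/
lemma eq_zero_of_mul_groupAlgConj {G : Type} [CommGroup G] {f : MonoidAlgebra ℂ G}
    (h : f * groupAlgConj G f = 0) : f = 0 := by
  classical
  have h1 : (f * groupAlgConj G f).coeff 1 = 0 := by rw [h]; simp
  rw [MonoidAlgebra.coeff_mul_apply_left] at h1
  simp only [groupAlgConj_apply, mul_one, inv_inv, Complex.mul_conj, Finsupp.sum] at h1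
  rw [← Complex.ofReal_sum, Complex.ofReal_eq_zero,
    Finset.sum_eq_zero_iff_of_nonneg fun _ _ => Complex.normSq_nonneg _] at h1
  ext g
  by_cases hg : g ∈ f.coeff.support
  · simpa using h1 g hg
  · simpa using hg

lemma groupAlg_isReduced (G : Type) [CommGroup G] : IsReduced (MonoidAlgebra ℂ G) := by
  rw [isReduced_iff_pow_one_lt 2 one_lt_two]
  intro f hf
  apply eq_zero_of_mul_groupAlgConj
  apply eq_zero_of_mul_groupAlgConj
  rw [map_mul, groupAlgConj_conj]
  linear_combination (groupAlgConj G f) ^ 2 * hf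

/-- The linear map `ℂG → S_G` extending `g ↦ [g]`. -/
def skeinMk (G : Type) [Group G] : MonoidAlgebra ℂ G →ₗ[ℂ] SkeinAlgebra G :=
  (RingQuot.mkAlgHom ℂ (SkeinRel G)).toLinearMap ∘ₗ TensorAlgebra.ι ℂ

/-- The class `[g]` of a group element in the skein algebra. -/
def skeinCls {G : Type} [Group G] (g : G) : SkeinAlgebra G :=
  RingQuot.mkAlgHom ℂ (SkeinRel G) (skeinGen G g)

lemma skeinMk_single {G : Type} [Group G] (g : G) (c : ℂ) :
    skeinMk G (MonoidAlgebra.single g c) = c • skeinCls g := by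
  have : MonoidAlgebra.single g c = c • MonoidAlgebra.of ℂ G g := by simp
  rw [this, map_smul]
  rfl

lemma skeinCls_one {G : Type} [Group G] : skeinCls (1 : G) = 2 := by
  exact (RingQuot.mkAlgHom_rel ℂ (SkeinRel.unit (G := G))).trans (map_ofNat _ 2)

lemma skeinCls_mul {G : Type} [Group G] (a b : G) :
    skeinCls a * skeinCls b = skeinCls (a * b) + skeinCls (a * b⁻¹) := by
  simpa [skeinCls] using RingQuot.mkAlgHom_rel ℂ (SkeinRel.mul a b)

lemma skeinCls_inv {G : Type} [Group G] (g : G) : skeinCls g⁻¹ = skeinCls g := by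
  have h := skeinCls_mul 1 g
  rw [skeinCls_one, two_mul, one_mul, one_mul] at h
  exact (add_left_cancel h).symm

/-- Products of classes reduce to sums of classes, so the classes span linearly. -/
lemma skein_span (G : Type) [Group G] :
    Submodule.span ℂ (Set.range (skeinCls : G → SkeinAlgebra G)) = ⊤ := by
  rw [eq_top_iff]
  rintro x -
  obtain ⟨t, rfl⟩ := RingQuot.mkAlgHom_surjective ℂ (SkeinRel G) x
  induction t using TensorAlgebra.induction with
  | algebraMap r =>
    have : RingQuot.mkAlgHom ℂ (SkeinRel G) (algebraMap ℂ _ r) =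
        (r / 2) • skeinCls (1 : G) := by
      rw [skeinCls_one, AlgHom.commutes, Algebra.algebraMap_eq_smul_one,
        ← one_add_one_eq_two (R := SkeinAlgebra G), smul_add, ← add_smul, add_halves]
    rw [this]
    exact Submodule.smul_mem _ _ (Submodule.subset_span ⟨1, rfl⟩)
  | ι m =>
    change skeinMk G m ∈ _
    induction m using MonoidAlgebra.induction_linear with
    | zero => simp
    | add f g hf hg => rw [map_add]; exact add_mem hf hg
    | single g c =>
      rw [skeinMk_single]
      exact Submodule.smul_mem _ _ (Submodule.subset_span ⟨g, rfl⟩)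
  | mul a b ha hb =>
    rw [map_mul]
    have h := Submodule.mul_mem_mul ha hb
    rw [Submodule.span_mul_span] at h
    refine Submodule.span_le.2 ?_ h
    rintro _ ⟨_, ⟨g, rfl⟩, _, ⟨k, rfl⟩, rfl⟩
    change skeinCls g * skeinCls k ∈ _
    rw [skeinCls_mul]
    exact add_mem (Submodule.subset_span ⟨_, rfl⟩) (Submodule.subset_span ⟨_, rfl⟩)
  | add a b ha hb => rw [map_add]; exact add_mem ha hb

/-- The linear endomorphism of `ℂG` sending `g` to `g + g⁻¹`. -/
def groupAlgSymm (G : Type) [CommGroup G] : MonoidAlgebra ℂ G →ₗ[ℂ] MonoidAlgebra ℂ G :=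
  LinearMap.id + (MonoidAlgebra.mapDomainAlgHom ℂ ℂ (invMonoidHom : G →* G)).toLinearMap

lemma lift_skeinGen {G : Type} [CommGroup G] (g : G) :
    TensorAlgebra.lift ℂ (groupAlgSymm G) (skeinGen G g) =
      MonoidAlgebra.single g 1 + MonoidAlgebra.single g⁻¹ 1 := by
  simp [skeinGen, groupAlgSymm]

/-- The algebra homomorphism `S_G → ℂG`, `[g] ↦ g + g⁻¹`, for abelian `G`. -/
def skeinHom (G : Type) [CommGroup G] : SkeinAlgebra G →ₐ[ℂ] MonoidAlgebra ℂ G :=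
  RingQuot.liftAlgHom ℂ ⟨TensorAlgebra.lift ℂ (groupAlgSymm G), by
    intro x y h
    induction h with
    | unit =>
      rw [lift_skeinGen, inv_one, map_ofNat, ← MonoidAlgebra.one_def, one_add_one_eq_two]
    | comm a b => rw [map_mul, map_mul, mul_comm]
    | mul a b =>
      simp only [map_mul, map_add, lift_skeinGen, add_mul, mul_add,
        MonoidAlgebra.single_mul_single, mul_one, mul_inv, inv_inv]
      abel⟩

lemma skeinHom_cls {G : Type} [CommGroup G] (g : G) :
    skeinHom G (skeinCls g) = MonoidAlgebra.single g 1 + MonoidAlgebra.single g⁻¹ 1 := by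
  rw [skeinHom, skeinCls, RingQuot.liftAlgHom_mkAlgHom_apply, lift_skeinGen]

/-- Halving the class map gives a linear left inverse of `[g] ↦ g + g⁻¹`. -/
lemma skeinHom_injective (G : Type) [CommGroup G] : Function.Injective (skeinHom G) := by
  have h : ((2⁻¹ : ℂ) • skeinMk G) ∘ₗ (skeinHom G).toLinearMap = LinearMap.id := by
    refine LinearMap.ext_on_range (skein_span G) fun g => ?_
    simp only [LinearMap.comp_apply, AlgHom.toLinearMap_apply, skeinHom_cls, map_add,
      LinearMap.smul_apply, skeinMk_single, skeinCls_inv, one_smul, LinearMap.id_apply]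
    rw [← add_smul]
    norm_num
  exact Function.LeftInverse.injective (g := (2⁻¹ : ℂ) • skeinMk G) (LinearMap.congr_fun h)

/-- For every finitely generated abelian group `Γ`, the skein algebra `S_Γ` is reduced:
it has no nonzero nilpotent elements. -/
theorem skeinAlgebra_abelian_isReduced (Γ : Type) [CommGroup Γ] [Group.FG Γ] :
    IsReduced (SkeinAlgebra Γ) := by
  have := groupAlg_isReduced Γ
  exact isReduced_of_injective (skeinHom Γ) (skeinHom_injective Γ)

end
end
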